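/- arXiv:1212.3364 — 6 statements merged into one kernel-verified Lean document; each statement's English description precedes it below -/
import Mathlib

section
/- Let q ∈ (0,1) and define 𝒫_q(x) = 1/2 + 2·Σ_{j=1}^∞ cos(jx)/(q^j + q^{−j}). Then for every x ∈ ℝ, 𝒫_q(x) > (1/2 + 2q/((1+q²)(1−q)))·((1−q)/(1+q))^{4/(1−q²)}. -/
open Real

/-- The Poisson kernel for the heat conduction equation,
`𝒫_q(x) = 1/2 + 2 ∑_{j=1}^∞ cos(jx)/(q^j + q^{-j})`. -/
noncomputable def heatPoissonKernel (q : ℝ) (x : ℝ) : ℝ :=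
  1 / 2 + 2 * ∑' j : ℕ, Real.cos ((j + 1 : ℝ) * x) / (q ^ (j + 1) + q⁻¹ ^ (j + 1))

/-! Let `θ(z) = ∑ q^(n²) zⁿ`. The Laurent coefficients `C m` of `θ(-z) ∑ zʲ / (qʲ + q⁻ʲ)` satisfy
`C (m + 1) = q^(2m+1) C m`, because the defect of this recursion is a multiple of `θ(-q) = 0`.
Hence the product is `C 0 * θ(z)`, and at `z = exp (i x)` the kernel `𝒫_q(x)` is a constant times
`ϑ₃(x) / ϑ₃(x + π)`. By the Jacobi triple product `ϑ₃` is increasing in `cos x`, so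
`𝒫_q(x) / 𝒫_q(0)` is at least `(ϑ₃(π) / ϑ₃(0))²`. The factors of `ϑ₃(π) / ϑ₃(0)` are
`((1 - q t) / (1 + q t))²` with `t = q^(2n)`, and `artanh (q t) ≤ t artanh q` bounds each one by a
power of `(1 - q) / (1 + q)`; the exponents sum to `2 / (1 - q²)`. Finally `𝒫_q(0)` exceeds its
bound because `q^j / (1 + q^(2j)) ≥ q^j / (1 + q²)`, strictly for `j > 1`. -/

open Filter Finset Topology

section GaussianBinomial

/-- The Gaussian binomial coefficient `[n choose k]_q`, defined through the `q`-Pascal rule so that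
it makes sense over any commutative semiring. -/
def gaussBinom {R : Type*} [CommSemiring R] (q : R) : ℕ → ℕ → R
  | _, 0 => 1
  | 0, _ + 1 => 0
  | n + 1, k + 1 => gaussBinom q n k + q ^ (k + 1) * gaussBinom q n (k + 1)

/-- The `q`-Pochhammer symbol `(q; q)_n = (1 - q)(1 - q²)⋯(1 - qⁿ)`. -/
def qPochhammer {R : Type*} [CommRing R] (q : R) (n : ℕ) : R :=
  ∏ i ∈ range n, (1 - q ^ (i + 1))

theorem gaussBinom_zero_right {R : Type*} [CommSemiring R] (q : R) (n : ℕ) :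
    gaussBinom q n 0 = 1 := by
  cases n <;> rfl

theorem gaussBinom_eq_zero_of_lt {R : Type*} [CommSemiring R] (q : R) {n k : ℕ} (h : n < k) :
    gaussBinom q n k = 0 := by
  induction n generalizing k with
  | zero =>
    obtain ⟨k, rfl⟩ := Nat.exists_eq_add_of_lt h
    simp [gaussBinom]
  | succ n ih =>
    obtain ⟨k, rfl⟩ : ∃ l, k = l + 1 := ⟨k - 1, by omega⟩
    simp [gaussBinom, ih (show n < k by omega), ih (show n < k + 1 by omega)]

theorem gaussBinom_self {R : Type*} [CommSemiring R] (q : R) (n : ℕ) : gaussBinom q n n = 1 := by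
  induction n with
  | zero => rfl
  | succ n ih => simp [gaussBinom, ih, gaussBinom_eq_zero_of_lt q n.lt_succ_self]

theorem qPochhammer_succ {R : Type*} [CommRing R] (q : R) (n : ℕ) :
    qPochhammer q (n + 1) = qPochhammer q n * (1 - q ^ (n + 1)) :=
  prod_range_succ _ n

theorem gaussBinom_add_mul_qPochhammer {R : Type*} [CommRing R] (q : R) (m k : ℕ) :
    gaussBinom q (m + k) k * (qPochhammer q m * qPochhammer q k) = qPochhammer q (m + k) := by
  induction k generalizing m with
  | zero => simp [gaussBinom_zero_right, qPochhammer]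
  | succ k ihk =>
    induction m with
    | zero => simp [gaussBinom_self, qPochhammer]
    | succ m ihm =>
      have hk := ihk (m + 1)
      rw [show m + 1 + k = m + (k + 1) by ring] at hk
      rw [show m + 1 + (k + 1) = m + (k + 1) + 1 by ring, gaussBinom,
        qPochhammer_succ q (m + (k + 1))]
      rw [qPochhammer_succ q m] at hk ⊢
      rw [qPochhammer_succ q k] at ihm ⊢
      linear_combination (1 - q ^ (k + 1)) * hk + q ^ (k + 1) * (1 - q ^ (m + 1)) * ihm

theorem prod_one_add_mul_pow_eq_sum_gaussBinom {R : Type*} [CommSemiring R] (q x : R) (n : ℕ) :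
    ∏ i ∈ range n, (1 + x * q ^ i) =
      ∑ k ∈ range (n + 1), gaussBinom q n k * q ^ k.choose 2 * x ^ k := by
  induction n generalizing x with
  | zero => simp [gaussBinom]
  | succ n ih =>
    have htail : ∏ i ∈ range n, (1 + x * q ^ (i + 1)) =
        ∑ k ∈ range (n + 1), gaussBinom q n k * q ^ k.choose 2 * (x * q) ^ k := by
      rw [← ih]; exact prod_congr rfl fun i _ => by ring
    have hlast : gaussBinom q n (n + 1) = 0 := gaussBinom_eq_zero_of_lt q n.lt_succ_self
    rw [prod_range_succ', htail, sum_range_succ' _ (n + 1), pow_zero, mul_one, mul_add, mul_one]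
    nth_rewrite 1 [show ∑ k ∈ range (n + 1), gaussBinom q n k * q ^ k.choose 2 * (x * q) ^ k =
      ∑ k ∈ range (n + 1), gaussBinom q n (k + 1) * q ^ (k + 1).choose 2 * (x * q) ^ (k + 1) + 1 by
        rw [sum_range_succ', sum_range_succ _ n, hlast]; simp [gaussBinom_zero_right]]
    rw [add_right_comm, sum_mul, ← sum_add_distrib]
    congr 1
    · refine sum_congr rfl fun k _ => ?_
      rw [gaussBinom, Nat.choose_succ_succ' k 1, Nat.choose_one_right]
      ring
    · simp [gaussBinom_zero_right]

end GaussianBinomial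

/-- The bilateral theta series `∑ q^(n²) zⁿ`; at `z = exp (i x)` it is Jacobi's `ϑ₃(x / 2, q)`. -/
noncomputable def thetaSeries {𝕜 : Type*} [NormedField 𝕜] (q z : 𝕜) : 𝕜 :=
  ∑' n : ℤ, q ^ (n ^ 2) * z ^ n

section ThetaSeries

variable {𝕜 : Type*} [NormedField 𝕜] {q : 𝕜}

theorem thetaSeries_neg_self [CharZero 𝕜] (hq : q ≠ 0) : thetaSeries q (-q) = 0 := by
  -- The involution `n ↦ -1 - n` fixes the exponent `n² + n` and reverses the sign `(-1)ⁿ`.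
  have hodd : thetaSeries q (-q) = -thetaSeries q (-q) := by
    nth_rewrite 1 [thetaSeries]
    rw [← (Equiv.subLeft (-1 : ℤ)).tsum_eq, thetaSeries, ← tsum_neg]
    refine tsum_congr fun n => ?_
    have hsign : (-1 : 𝕜) ^ (-1 - n) = -(-1) ^ n := by
      rw [zpow_sub₀ (by norm_num)]; rcases n.even_or_odd with h | h <;> simp [h.neg_one_zpow]
    rw [Equiv.subLeft_apply, neg_eq_neg_one_mul q, mul_zpow, mul_zpow, hsign, mul_left_comm,
      mul_left_comm _ ((-1) ^ n), ← zpow_add₀ hq, ← zpow_add₀ hq, neg_mul]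
    ring_nf
  exact self_eq_neg.mp hodd

theorem summable_norm_pow_sq_mul_pow (hq : ‖q‖ < 1) (z : 𝕜) :
    Summable fun n : ℕ => ‖q ^ (n ^ 2) * z ^ n‖ := by
  have hlim : Tendsto (fun n : ℕ => ‖q‖ ^ n * ‖z‖) atTop (𝓝 0) := by
    simpa using (tendsto_pow_atTop_nhds_zero_of_lt_one (norm_nonneg q) hq).mul_const ‖z‖
  refine .of_norm_bounded_eventually_nat summable_geometric_two ?_
  filter_upwards [hlim.eventually_le_const one_half_pos] with n hn
  calc ‖‖q ^ (n ^ 2) * z ^ n‖‖ = (‖q‖ ^ n * ‖z‖) ^ n := by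
        rw [norm_norm, norm_mul, norm_pow, norm_pow, mul_pow, ← pow_mul, sq]
    _ ≤ (1 / 2) ^ n := by gcongr

theorem summable_norm_thetaSeries (hq : ‖q‖ < 1) (z : 𝕜) :
    Summable fun n : ℤ => ‖q ^ (n ^ 2) * z ^ n‖ := by
  refine .of_nat_of_neg ?_ ?_
  · exact_mod_cast summable_norm_pow_sq_mul_pow hq z
  · simp only [neg_sq, zpow_neg, ← inv_zpow]
    exact_mod_cast summable_norm_pow_sq_mul_pow hq z⁻¹

end ThetaSeries

section JacobiTripleProduct

theorem prod_jacobi_eq_prod_one_add_mul_pow {K : Type*} [Field K] {q z : K} (hq : q ≠ 0)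
    (hz : z ≠ 0) (N : ℕ) :
    ∏ n ∈ range N, (1 + q ^ (2 * n + 1) * z) * (1 + q ^ (2 * n + 1) * z⁻¹) =
      q ^ N ^ 2 * z⁻¹ ^ N * ∏ i ∈ range (2 * N), (1 + z * q / q ^ (2 * N) * (q ^ 2) ^ i) := by
  induction N with
  | zero => simp
  | succ N ih =>
    have hshift : ∏ i ∈ range (2 * N), (1 + z * q / q ^ (2 * (N + 1)) * (q ^ 2) ^ (i + 1)) =
        ∏ i ∈ range (2 * N), (1 + z * q / q ^ (2 * N) * (q ^ 2) ^ i) :=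
      prod_congr rfl fun i _ => by field_simp; ring
    rw [prod_range_succ, ih, show 2 * (N + 1) = 2 * N + 1 + 1 by ring, prod_range_succ,
      prod_range_succ', ← show 2 * (N + 1) = 2 * N + 1 + 1 by ring, hshift]
    generalize ∏ i ∈ range (2 * N), (1 + z * q / q ^ (2 * N) * (q ^ 2) ^ i) = A
    simp only [inv_pow]
    field_simp
    ring

theorem sum_range_two_mul_add_one_eq_sum_Icc {M : Type*} [AddCommMonoid M] (f : ℤ → M) (N : ℕ) :
    ∑ k ∈ range (2 * N + 1), f (k - N) = ∑ k ∈ Icc (-N : ℤ) N, f k :=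
  sum_bij' (fun k _ => (k - N : ℤ)) (fun k _ => (k + N).toNat)
    (by simp only [mem_range, mem_Icc]; omega) (by simp only [mem_range, mem_Icc]; omega) (by simp)
    (by simp only [mem_Icc]; omega) (by simp)

theorem gaussBinom_two_mul_eq_div {K : Type*} [Field K] {q : K}
    (hq : ∀ n, qPochhammer q n ≠ 0) {N k : ℕ} (hk : k ≤ 2 * N) :
    gaussBinom q (2 * N) k = qPochhammer q (2 * N) /
      (qPochhammer q (N - (k - N : ℤ).natAbs) * qPochhammer q (N + (k - N : ℤ).natAbs)) := by
  rw [eq_div_iff (mul_ne_zero (hq _) (hq _))]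
  have h := gaussBinom_add_mul_qPochhammer q (2 * N - k) k
  rw [Nat.sub_add_cancel hk] at h
  rcases le_total k N with hkN | hkN
  · rw [← h, mul_comm (qPochhammer q (2 * N - k)),
      show N - (k - N : ℤ).natAbs = k by omega, show N + (k - N : ℤ).natAbs = 2 * N - k by omega]
  · rw [← h,
      show N - (k - N : ℤ).natAbs = 2 * N - k by omega, show N + (k - N : ℤ).natAbs = k by omega]

theorem prod_jacobi_eq_sum_Icc {K : Type*} [Field K] {q z : K} (hq : q ≠ 0) (hz : z ≠ 0)
    (hP : ∀ n, qPochhammer (q ^ 2) n ≠ 0) (N : ℕ) :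
    ∏ n ∈ range N, (1 + q ^ (2 * n + 1) * z) * (1 + q ^ (2 * n + 1) * z⁻¹) =
      ∑ k ∈ Icc (-N : ℤ) N, qPochhammer (q ^ 2) (2 * N) /
        (qPochhammer (q ^ 2) (N - k.natAbs) * qPochhammer (q ^ 2) (N + k.natAbs)) *
          (q ^ (k ^ 2) * z ^ k) := by
  rw [prod_jacobi_eq_prod_one_add_mul_pow hq hz, prod_one_add_mul_pow_eq_sum_gaussBinom, mul_sum,
    ← sum_range_two_mul_add_one_eq_sum_Icc]
  refine sum_congr rfl fun k hk => ?_
  rw [← gaussBinom_two_mul_eq_div hP (by simpa [Nat.lt_succ_iff] using hk)]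
  have hchoose : (q ^ 2) ^ k.choose 2 * q ^ k = q ^ k ^ 2 := by
    rw [← pow_mul, ← pow_add, Nat.choose_two_right,
      Nat.mul_div_cancel' k.even_mul_pred_self.two_dvd]
    cases k with
    | zero => rfl
    | succ k => rw [Nat.add_sub_cancel]; ring
  have hsq : q ^ ((k - N : ℤ) ^ 2) = q ^ k ^ 2 * q ^ N ^ 2 / (q ^ (2 * N)) ^ k := by
    rw [show ((k - N : ℤ) ^ 2) = (k ^ 2 : ℕ) + (N ^ 2 : ℕ) - (2 * N * k : ℕ) by push_cast; ring,
      zpow_sub₀ hq, zpow_add₀ hq, zpow_natCast, zpow_natCast, zpow_natCast, pow_mul]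
  rw [hsq, zpow_sub₀ hz, zpow_natCast, zpow_natCast, ← hchoose, div_pow, mul_pow, inv_pow]
  field_simp

variable {𝕜 : Type*} [NormedField 𝕜] {q z : 𝕜}

theorem one_sub_pow_ne_zero (hq : ‖q‖ < 1) (n : ℕ) : 1 - q ^ (n + 1) ≠ 0 := by
  intro h
  have hnorm : ‖q ^ (n + 1)‖ < 1 := by
    rw [norm_pow]; exact pow_lt_one₀ (norm_nonneg q) hq n.succ_ne_zero
  rw [← sub_eq_zero.mp h, norm_one] at hnorm
  exact lt_irrefl _ hnorm

theorem qPochhammer_ne_zero (hq : ‖q‖ < 1) (n : ℕ) : qPochhammer q n ≠ 0 :=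
  prod_ne_zero_iff.mpr fun i _ => one_sub_pow_ne_zero hq i

theorem summable_norm_pow_succ (hq : ‖q‖ < 1) : Summable fun n : ℕ => ‖-q ^ (n + 1)‖ := by
  simpa only [norm_neg, pow_succ, norm_mul, norm_pow] using
    (summable_geometric_of_lt_one (norm_nonneg q) hq).mul_right ‖q‖

variable [CompleteSpace 𝕜]

theorem multipliable_one_sub_pow_succ (hq : ‖q‖ < 1) :
    Multipliable fun n : ℕ => 1 - q ^ (n + 1) := by
  simp only [sub_eq_add_neg]
  exact multipliable_one_add_of_summable (f := fun n : ℕ => -q ^ (n + 1))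
    (summable_norm_pow_succ hq)

theorem exists_tendsto_qPochhammer (hq : ‖q‖ < 1) :
    ∃ P : 𝕜, P ≠ 0 ∧ Tendsto (qPochhammer q) atTop (𝓝 P) := by
  refine ⟨_, ?_, (multipliable_one_sub_pow_succ hq).hasProd.tendsto_prod_nat⟩
  simp only [sub_eq_add_neg]
  refine tprod_one_add_ne_zero_of_summable (f := fun n : ℕ => -q ^ (n + 1)) (fun n => ?_)
    (summable_norm_pow_succ hq)
  rw [← sub_eq_add_neg]
  exact one_sub_pow_ne_zero hq n

theorem exists_norm_qPochhammer_div_le (hq : ‖q‖ < 1) :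
    ∃ C : ℝ, ∀ l m n, ‖qPochhammer q l / (qPochhammer q m * qPochhammer q n)‖ ≤ C := by
  obtain ⟨P, hP, hlim⟩ := exists_tendsto_qPochhammer hq
  obtain ⟨A, hA⟩ := (Metric.isBounded_range_of_tendsto _ hlim).exists_norm_le
  obtain ⟨B, hB⟩ := (Metric.isBounded_range_of_tendsto _ (hlim.inv₀ hP)).exists_norm_le
  simp only [Set.forall_mem_range] at hA hB
  have hA0 : 0 ≤ A := (norm_nonneg _).trans (hA 0)
  have hB0 : 0 ≤ B := (norm_nonneg _).trans (hB 0)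
  refine ⟨A * (B * B), fun l m n => ?_⟩
  rw [div_eq_mul_inv, mul_inv, norm_mul, norm_mul]
  gcongr
  exacts [hA l, hB m, hB n]

theorem tendsto_prod_jacobi (hq0 : q ≠ 0) (hq : ‖q‖ < 1) (hz : z ≠ 0) {P : 𝕜} (hP : P ≠ 0)
    (hlim : Tendsto (qPochhammer (q ^ 2)) atTop (𝓝 P)) :
    Tendsto (fun N => ∏ n ∈ range N, (1 + q ^ (2 * n + 1) * z) * (1 + q ^ (2 * n + 1) * z⁻¹))
      atTop (𝓝 (P⁻¹ * thetaSeries q z)) := by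
  have hq2 : ‖q ^ 2‖ < 1 := by rw [norm_pow]; exact pow_lt_one₀ (norm_nonneg q) hq two_ne_zero
  obtain ⟨C, hC⟩ := exists_norm_qPochhammer_div_le hq2
  let term (N : ℕ) (k : ℤ) : 𝕜 := qPochhammer (q ^ 2) (2 * N) /
    (qPochhammer (q ^ 2) (N - k.natAbs) * qPochhammer (q ^ 2) (N + k.natAbs)) *
      (q ^ (k ^ 2) * z ^ k)
  have hsum (N : ℕ) : ∏ n ∈ range N, (1 + q ^ (2 * n + 1) * z) * (1 + q ^ (2 * n + 1) * z⁻¹) =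
      ∑' k, (Icc (-N : ℤ) N : Set ℤ).indicator (term N) k := by
    rw [prod_jacobi_eq_sum_Icc hq0 hz (qPochhammer_ne_zero hq2), ← sum_eq_tsum_indicator]
  simp only [hsum, thetaSeries, ← tsum_mul_left]
  refine tendsto_tsum_of_dominated_convergence ((summable_norm_thetaSeries hq z).mul_left C)
    (fun k => ?_) (.of_forall fun N k => ?_)
  · have hquot := (hlim.comp (tendsto_id.const_mul_atTop' two_pos)).div
      ((hlim.comp (tendsto_sub_atTop_nat k.natAbs)).mul
        (hlim.comp (tendsto_add_atTop_nat k.natAbs))) (mul_ne_zero hP hP)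
    rw [div_mul_cancel_left₀ hP] at hquot
    refine (hquot.mul_const (q ^ (k ^ 2) * z ^ k)).congr' ?_
    filter_upwards [eventually_ge_atTop k.natAbs] with N hN
    rw [Set.indicator_of_mem (by rw [coe_Icc, Set.mem_Icc]; omega)]
    rfl
  · refine (norm_indicator_le_norm_self _ _).trans ?_
    rw [norm_mul]
    gcongr
    exact hC _ _ _

theorem hasProd_thetaSeries (hq0 : q ≠ 0) (hq : ‖q‖ < 1) (hz : z ≠ 0) :
    HasProd (fun n : ℕ => (1 - (q ^ 2) ^ (n + 1)) *
      ((1 + q ^ (2 * n + 1) * z) * (1 + q ^ (2 * n + 1) * z⁻¹))) (thetaSeries q z) := by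
  have hq2 : ‖q ^ 2‖ < 1 := by rw [norm_pow]; exact pow_lt_one₀ (norm_nonneg q) hq two_ne_zero
  have hodd (w : 𝕜) : Multipliable fun n : ℕ => 1 + q ^ (2 * n + 1) * w := by
    refine multipliable_one_add_of_summable (f := fun n : ℕ => q ^ (2 * n + 1) * w) ?_
    simpa only [pow_succ, pow_mul, norm_mul, norm_pow, mul_assoc] using
      (summable_geometric_of_lt_one (norm_nonneg _) hq2).mul_right (‖q‖ * ‖w‖)
  obtain ⟨P, hP, hlim⟩ := exists_tendsto_qPochhammer hq2
  have hmult := (multipliable_one_sub_pow_succ hq2).mul ((hodd z).mul (hodd z⁻¹))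
  have htheta := hlim.mul (tendsto_prod_jacobi hq0 hq hz hP hlim)
  simp only [qPochhammer, ← prod_mul_distrib] at htheta
  rw [mul_inv_cancel_left₀ hP] at htheta
  exact tendsto_nhds_unique hmult.hasProd.tendsto_prod_nat htheta ▸ hmult.hasProd

end JacobiTripleProduct

/-- The Laurent series `∑ zʲ / (qʲ + q⁻ʲ)` over all integers `j`; at `z = exp (i x)` it is
`𝒫_q(x)`. -/
noncomputable def heatPoissonSeries {𝕜 : Type*} [NormedField 𝕜] (q z : 𝕜) : 𝕜 :=
  ∑' j : ℤ, z ^ j / (q ^ j + q ^ (-j))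

/-- The coefficient of `zᵐ` in the Laurent expansion of
`thetaSeries q (-z) * heatPoissonSeries q z`. -/
noncomputable def thetaMulHeatPoissonCoeff {𝕜 : Type*} [NormedField 𝕜] (q : 𝕜) (m : ℤ) : 𝕜 :=
  ∑' n : ℤ, q ^ (n ^ 2) * (-1) ^ n / (q ^ (m - n) + q ^ (-(m - n)))

section Quotient

variable {𝕜 : Type*} [NormedField 𝕜] {q z : 𝕜}

theorem summable_norm_pow_div_pow_add_inv (hq0 : q ≠ 0) (hq : ‖q‖ < 1) (hz : ‖q * z‖ < 1) :
    Summable fun n : ℕ => ‖z ^ n / (q ^ n + (q ^ n)⁻¹)‖ := by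
  refine .of_norm_bounded_eventually_nat
    ((summable_geometric_of_lt_one (norm_nonneg _) hz).mul_right (1 - ‖q‖)⁻¹) ?_
  filter_upwards [eventually_ge_atTop 1] with n hn
  have hlower : 1 - ‖q‖ ≤ ‖1 + (q ^ n) ^ 2‖ := by
    have hpow : ‖(q ^ n) ^ 2‖ ≤ ‖q‖ := by
      rw [← pow_mul, norm_pow]
      exact pow_le_of_le_one (norm_nonneg q) hq.le (by omega)
    have := norm_sub_le_norm_add (1 : 𝕜) ((q ^ n) ^ 2)
    rw [norm_one] at this
    linarith
  have hfactor : z ^ n / (q ^ n + (q ^ n)⁻¹) = (q * z) ^ n * (1 + (q ^ n) ^ 2)⁻¹ := by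
    rw [show q ^ n + (q ^ n)⁻¹ = (1 + (q ^ n) ^ 2) / q ^ n by field_simp; ring, mul_pow]
    field_simp
  rw [norm_norm, hfactor, norm_mul, norm_inv, norm_pow]
  have := sub_pos.mpr hq
  gcongr

theorem summable_norm_heatPoissonSeries (hq0 : q ≠ 0) (hq : ‖q‖ < 1) (hz : ‖q * z‖ < 1)
    (hz' : ‖q * z⁻¹‖ < 1) : Summable fun j : ℤ => ‖z ^ j / (q ^ j + q ^ (-j))‖ := by
  refine .of_nat_of_neg ?_ ?_
  · simpa only [zpow_neg, zpow_natCast] using summable_norm_pow_div_pow_add_inv hq0 hq hz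
  · simpa only [zpow_neg, zpow_natCast, inv_pow, inv_inv, add_comm] using
      summable_norm_pow_div_pow_add_inv hq0 hq hz'

theorem zpow_add_zpow_neg_ne_zero [CharZero 𝕜] (hq0 : q ≠ 0) (hq : ‖q‖ < 1) (j : ℤ) :
    q ^ j + q ^ (-j) ≠ 0 := by
  intro h
  have hnorm : ‖q‖ ^ (j - -j) = 1 := by
    rw [zpow_sub₀ (norm_ne_zero_iff.mpr hq0), ← norm_zpow, ← norm_zpow,
      eq_neg_of_add_eq_zero_left h, norm_neg, div_self (norm_ne_zero_iff.mpr (zpow_ne_zero _ hq0))]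
  obtain rfl : j = 0 := by
    have := (zpow_eq_one_iff_right₀ (norm_nonneg q) hq.ne).mp hnorm
    omega
  norm_num at h

theorem summable_thetaMulHeatPoissonCoeff [CompleteSpace 𝕜] (hq0 : q ≠ 0) (hq : ‖q‖ < 1) (m : ℤ) :
    Summable fun n : ℤ => q ^ (n ^ 2) * (-1) ^ n / (q ^ (m - n) + q ^ (-(m - n))) := by
  have hw := summable_norm_heatPoissonSeries (z := 1) hq0 hq (by simpa) (by simpa)
  refine ((summable_mul_of_summable_norm (summable_norm_thetaSeries hq (-1)) hw).comp_injective
    (i := fun n => (n, m - n)) fun _ _ h => (Prod.ext_iff.mp h).1).congr fun n => ?_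
  simp only [one_zpow, Function.comp_apply, mul_one_div]

theorem pow_sq_div_shift_sub [CharZero 𝕜] (hq0 : q ≠ 0) (hq : ‖q‖ < 1) (m n : ℤ) :
    q ^ ((n + 1) ^ 2) * (-1) ^ (n + 1) / (q ^ (m - n) + q ^ (-(m - n))) -
        q ^ (2 * m + 1) * (q ^ (n ^ 2) * (-1) ^ n / (q ^ (m - n) + q ^ (-(m - n)))) =
      -q ^ (m + 1) * (q ^ (n ^ 2) * (-q) ^ n) := by
  have hpow : q ^ ((n + 1) ^ 2) + q ^ (2 * m + 1) * q ^ (n ^ 2) =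
      q ^ (m + 1) * q ^ (n ^ 2) * q ^ n * (q ^ (m - n) + q ^ (-(m - n))) := by
    simp only [mul_add, ← zpow_add₀ hq0]
    ring_nf
  have hden := zpow_add_zpow_neg_ne_zero hq0 hq (m - n)
  rw [zpow_add_one₀ (neg_ne_zero.mpr one_ne_zero), neg_eq_neg_one_mul q, mul_zpow]
  generalize q ^ (m - n) + q ^ (-(m - n)) = D at hpow hden ⊢
  field_simp
  linear_combination -hpow

theorem thetaMulHeatPoissonCoeff_add_one [CharZero 𝕜] [CompleteSpace 𝕜] (hq0 : q ≠ 0)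
    (hq : ‖q‖ < 1) (m : ℤ) :
    thetaMulHeatPoissonCoeff q (m + 1) = q ^ (2 * m + 1) * thetaMulHeatPoissonCoeff q m := by
  have hshift := (Equiv.addRight (1 : ℤ)).hasSum_iff.mpr
    (summable_thetaMulHeatPoissonCoeff hq0 hq (m + 1)).hasSum
  have hdiff := hshift.sub
    ((summable_thetaMulHeatPoissonCoeff hq0 hq m).hasSum.mul_left (q ^ (2 * m + 1)))
  simp only [Function.comp_apply, Equiv.coe_addRight, add_sub_add_right_eq_sub,
    pow_sq_div_shift_sub hq0 hq] at hdiff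
  refine sub_eq_zero.mp (hdiff.tsum_eq.symm.trans ?_)
  rw [tsum_mul_left, ← thetaSeries, thetaSeries_neg_self hq0, mul_zero]

theorem thetaMulHeatPoissonCoeff_eq [CharZero 𝕜] [CompleteSpace 𝕜] (hq0 : q ≠ 0) (hq : ‖q‖ < 1)
    (m : ℤ) : thetaMulHeatPoissonCoeff q m = q ^ (m ^ 2) * thetaMulHeatPoissonCoeff q 0 := by
  induction m with
  | zero => simp
  | succ m ih =>
    rw [thetaMulHeatPoissonCoeff_add_one hq0 hq, ih, ← mul_assoc, ← zpow_add₀ hq0]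
    ring_nf
  | pred m ih =>
    have hstep := thetaMulHeatPoissonCoeff_add_one hq0 hq (-m - 1)
    rw [sub_add_cancel, ih] at hstep
    refine mul_left_cancel₀ (zpow_ne_zero (2 * (-m - 1) + 1) hq0) ?_
    rw [← hstep, ← mul_assoc, ← zpow_add₀ hq0]
    ring_nf

theorem thetaSeries_neg_mul_heatPoissonSeries [CharZero 𝕜] [CompleteSpace 𝕜] (hq0 : q ≠ 0)
    (hq : ‖q‖ < 1) (hz0 : z ≠ 0) (hz : ‖q * z‖ < 1) (hz' : ‖q * z⁻¹‖ < 1) :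
    thetaSeries q (-z) * heatPoissonSeries q z =
      thetaMulHeatPoissonCoeff q 0 * thetaSeries q z := by
  have htheta := summable_norm_thetaSeries hq (-z)
  have hpoisson := summable_norm_heatPoissonSeries hq0 hq hz hz'
  let term (n m : ℤ) : 𝕜 := q ^ (n ^ 2) * (-1) ^ n / (q ^ (m - n) + q ^ (-(m - n))) * z ^ m
  have hterm (n m : ℤ) :
      q ^ (n ^ 2) * (-z) ^ n * (z ^ (m - n) / (q ^ (m - n) + q ^ (-(m - n)))) = term n m := by
    simp only [term]
    rw [neg_eq_neg_one_mul z, mul_zpow, zpow_sub₀ hz0]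
    field_simp
  let e : ℤ × ℤ ≃ ℤ × ℤ := (Equiv.refl ℤ).prodShear Equiv.subRight
  have hsum : Summable (Function.uncurry term) :=
    (e.summable_iff.mpr (summable_mul_of_summable_norm htheta hpoisson)).congr
      fun p => hterm p.1 p.2
  calc thetaSeries q (-z) * heatPoissonSeries q z = ∑' (n : ℤ) (m : ℤ), term n m := by
        rw [thetaSeries, heatPoissonSeries, tsum_mul_tsum_of_summable_norm htheta hpoisson,
          ← e.tsum_eq]
        exact (tsum_congr fun p : ℤ × ℤ => hterm p.1 p.2).trans hsum.tsum_prod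
    _ = ∑' m : ℤ, thetaMulHeatPoissonCoeff q m * z ^ m := by
        rw [← hsum.tsum_comm]
        simp only [term, tsum_mul_right, thetaMulHeatPoissonCoeff]
    _ = thetaMulHeatPoissonCoeff q 0 * thetaSeries q z := by
        rw [thetaSeries, ← tsum_mul_left]
        exact tsum_congr fun m => by rw [thetaMulHeatPoissonCoeff_eq hq0 hq m]; ring

end Quotient

section CosineSeries

variable {c : ℤ → ℝ}

theorem summable_mul_cos_of_summable_abs (hc : Summable fun n => |c n|) (x : ℝ) :
    Summable fun n : ℤ => c n * Real.cos (n * x) :=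
  .of_norm_bounded hc fun n => by
    rw [norm_mul]
    exact mul_le_of_le_one_right (norm_nonneg _) (Real.abs_cos_le_one _)

theorem ofReal_tsum_mul_cos_of_even (hc : Summable fun n => |c n|) (heven : c.Even) (x : ℝ) :
    ((∑' n : ℤ, c n * Real.cos (n * x) : ℝ) : ℂ) =
      ∑' n : ℤ, (c n : ℂ) * Complex.exp (x * Complex.I) ^ n := by
  have hexp (n : ℤ) :
      Complex.exp (x * Complex.I) ^ n = Real.cos (n * x) + Real.sin (n * x) * Complex.I := by
    rw [← Complex.exp_int_mul, ← mul_assoc, Complex.exp_mul_I]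
    push_cast
    rfl
  have hsum : Summable fun n : ℤ => (c n : ℂ) * Complex.exp (x * Complex.I) ^ n := by
    refine .of_norm (hc.congr fun n => ?_)
    rw [norm_mul, norm_zpow, Complex.norm_exp_ofReal_mul_I, one_zpow, mul_one, Complex.norm_real,
      Real.norm_eq_abs]
  have hodd : ∑' n : ℤ, c n * Real.sin (n * x) = -∑' n : ℤ, c n * Real.sin (n * x) := by
    nth_rewrite 1 [← tsum_comp_neg]
    simp [heven _, tsum_neg]
  refine Complex.ext ?_ ?_
  · rw [Complex.re_tsum hsum]
    simp [hexp, -Complex.ofReal_cos, -Complex.ofReal_sin]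
  · rw [Complex.im_tsum hsum]
    simp [hexp, self_eq_neg.mp hodd, -Complex.ofReal_cos, -Complex.ofReal_sin]

end CosineSeries

section RpowBounds

variable {q : ℝ}

theorem one_sub_div_one_add_rpow_le {t : ℝ} (hq0 : 0 ≤ q) (hq1 : q < 1) (ht0 : 0 ≤ t)
    (ht1 : t ≤ 1) : ((1 - q) / (1 + q)) ^ t ≤ (1 - q * t) / (1 + q * t) := by
  have hqt0 : 0 ≤ q * t := mul_nonneg hq0 ht0
  have hqt1 : q * t < 1 := (mul_le_of_le_one_right hq0 ht1).trans_lt hq1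
  have hlog : Real.log (1 + q * t) - Real.log (1 - q * t) ≤
      t * (Real.log (1 + q) - Real.log (1 - q)) := by
    refine hasSum_le (fun k => ?_)
      (Real.hasSum_log_sub_log_of_abs_lt_one (by rwa [abs_of_nonneg hqt0]))
      ((Real.hasSum_log_sub_log_of_abs_lt_one (by rwa [abs_of_nonneg hq0])).mul_left t)
    have hpow : t ^ (2 * k + 1) ≤ t := pow_le_of_le_one ht0 ht1 (by omega)
    rw [mul_pow, mul_left_comm t, mul_comm (q ^ _)]
    gcongr
  have hnum : 0 < 1 - q := sub_pos.mpr hq1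
  have hnum_mul : 0 < 1 - q * t := sub_pos.mpr hqt1
  rw [← Real.log_le_log_iff (Real.rpow_pos_of_pos (div_pos hnum (by positivity)) t)
    (div_pos hnum_mul (by positivity)), Real.log_rpow (div_pos hnum (by positivity)),
    Real.log_div hnum.ne' (by positivity), Real.log_div hnum_mul.ne' (by positivity)]
  linarith

theorem one_sub_div_one_add_rpow_mul_le {t : ℝ} (hq0 : 0 ≤ q) (hq1 : q < 1) (ht0 : 0 ≤ t)
    (ht1 : t ≤ 1) : ((1 - q) / (1 + q)) ^ (2 * t) * (1 + q * t) ^ 2 ≤ (1 - q * t) ^ 2 := by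
  have hρ : 0 ≤ (1 - q) / (1 + q) := div_nonneg (sub_nonneg.mpr hq1.le) (by positivity)
  rw [mul_comm 2 t, Real.rpow_mul hρ, Real.rpow_two, ← mul_pow]
  refine pow_le_pow_left₀ (mul_nonneg (Real.rpow_nonneg hρ t) (by positivity)) ?_ 2
  exact (le_div_iff₀ (by positivity)).mp (one_sub_div_one_add_rpow_le hq0 hq1 ht0 ht1)

theorem rpow_div_one_sub_le_prod_range {ρ a Q : ℝ} (hρ0 : 0 < ρ) (hρ1 : ρ ≤ 1) (ha : 0 ≤ a)
    (hQ0 : 0 ≤ Q) (hQ1 : Q < 1) (N : ℕ) : ρ ^ (a / (1 - Q)) ≤ ∏ n ∈ range N, ρ ^ (a * Q ^ n) := by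
  rw [← Real.rpow_sum_of_pos hρ0, div_eq_mul_inv]
  exact Real.rpow_le_rpow_of_exponent_ge hρ0 hρ1 <| sum_le_hasSum _ (fun n _ => by positivity)
    ((hasSum_geometric_of_lt_one hQ0 hQ1).mul_left a)

end RpowBounds

/-- Jacobi's theta function `ϑ₃(x / 2, q) = ∑ q^(n²) cos (n x)` of a real argument, summed over all
integers `n`. -/
noncomputable def jacobiTheta₃ (q x : ℝ) : ℝ :=
  ∑' n : ℤ, q ^ (n ^ 2) * Real.cos (n * x)

section JacobiTheta₃

variable {q : ℝ}

theorem summable_abs_pow_sq (hq : |q| < 1) : Summable fun n : ℤ => |q ^ (n ^ 2)| := by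
  simpa using summable_norm_thetaSeries (𝕜 := ℝ) hq 1

theorem ofReal_jacobiTheta₃ (hq : |q| < 1) (x : ℝ) :
    (jacobiTheta₃ q x : ℂ) = thetaSeries (q : ℂ) (Complex.exp (x * Complex.I)) := by
  rw [jacobiTheta₃, ofReal_tsum_mul_cos_of_even (summable_abs_pow_sq hq) fun n => by rw [neg_sq],
    thetaSeries]
  push_cast
  rfl

theorem one_add_mul_exp_mul_one_add_mul_exp_inv (r x : ℝ) :
    (1 + r * Complex.exp (x * Complex.I)) * (1 + r * (Complex.exp (x * Complex.I))⁻¹) =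
      ((1 + 2 * r * Real.cos x + r ^ 2 : ℝ) : ℂ) := by
  rw [← Complex.exp_neg, ← neg_mul]
  have hexp : Complex.exp (x * Complex.I) * Complex.exp (-x * Complex.I) = 1 := by
    rw [← Complex.exp_add, neg_mul, add_neg_cancel, Complex.exp_zero]
  push_cast
  linear_combination (r : ℂ) ^ 2 * hexp - (r : ℂ) * Complex.two_cos x

theorem hasProd_jacobiTheta₃ (hq0 : q ≠ 0) (hq : |q| < 1) (x : ℝ) :
    HasProd (fun n : ℕ => (1 - (q ^ 2) ^ (n + 1)) *
      (1 + 2 * q ^ (2 * n + 1) * Real.cos x + (q ^ (2 * n + 1)) ^ 2)) (jacobiTheta₃ q x) := by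
  refine (Topology.IsInducing.hasProd_iff (g := Complex.ofRealHom)
    Complex.isUniformEmbedding_ofReal.isInducing _ _).mp ?_
  have hprod := hasProd_thetaSeries (Complex.ofReal_ne_zero.mpr hq0) (by simpa)
    (Complex.exp_ne_zero (x * Complex.I))
  rw [← ofReal_jacobiTheta₃ hq] at hprod
  refine hprod.congr_fun fun n => ?_
  have hfactor := one_add_mul_exp_mul_one_add_mul_exp_inv (q ^ (2 * n + 1)) x
  push_cast at hfactor
  simp [hfactor]

theorem jacobiTheta₃_le_of_cos_le (hq0 : 0 < q) (hq1 : q < 1) {x y : ℝ}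
    (hxy : Real.cos x ≤ Real.cos y) : jacobiTheta₃ q x ≤ jacobiTheta₃ q y := by
  have habs : |q| < 1 := by rwa [abs_of_pos hq0]
  refine le_of_tendsto_of_tendsto' (hasProd_jacobiTheta₃ hq0.ne' habs x).tendsto_prod_nat
    (hasProd_jacobiTheta₃ hq0.ne' habs y).tendsto_prod_nat fun N => prod_le_prod ?_ ?_
  all_goals
    intro n _
    have hodd : 0 < q ^ (2 * n + 1) := by positivity
    have heven : 0 ≤ 1 - (q ^ 2) ^ (n + 1) :=
      sub_nonneg.mpr (pow_le_one₀ (sq_nonneg q) (pow_le_one₀ hq0.le hq1.le))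
  · refine mul_nonneg heven ?_
    nlinarith [Real.neg_one_le_cos x, sq_nonneg (1 - q ^ (2 * n + 1))]
  · gcongr

theorem jacobiTheta₃_zero_pos (hq0 : 0 ≤ q) (hq1 : q < 1) : 0 < jacobiTheta₃ q 0 := by
  refine (summable_mul_cos_of_summable_abs (summable_abs_pow_sq (by rwa [abs_of_nonneg hq0]))
    0).tsum_pos (fun n => ?_) 0 ?_
  · rw [mul_zero, Real.cos_zero]
    positivity
  · simp

theorem rpow_mul_jacobiTheta₃_zero_le_pi (hq0 : 0 < q) (hq1 : q < 1) :
    ((1 - q) / (1 + q)) ^ (2 / (1 - q ^ 2)) * jacobiTheta₃ q 0 ≤ jacobiTheta₃ q π := by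
  have habs : |q| < 1 := by rwa [abs_of_pos hq0]
  have hsq : q ^ 2 < 1 := pow_lt_one₀ hq0.le hq1 two_ne_zero
  have hρ0 : 0 < (1 - q) / (1 + q) := div_pos (sub_pos.mpr hq1) (by positivity)
  have hρ1 : (1 - q) / (1 + q) ≤ 1 := (div_le_one (by positivity)).mpr (by linarith)
  refine le_of_tendsto_of_tendsto'
    ((hasProd_jacobiTheta₃ hq0.ne' habs 0).tendsto_prod_nat.const_mul _)
    (hasProd_jacobiTheta₃ hq0.ne' habs π).tendsto_prod_nat fun N => ?_
  have heven (n : ℕ) : 0 ≤ 1 - (q ^ 2) ^ (n + 1) :=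
    sub_nonneg.mpr (pow_le_one₀ (sq_nonneg q) hsq.le)
  simp only [Real.cos_zero, Real.cos_pi]
  calc _ ≤ (∏ n ∈ range N, ((1 - q) / (1 + q)) ^ (2 * (q ^ 2) ^ n)) * _ := by
        refine mul_le_mul_of_nonneg_right (rpow_div_one_sub_le_prod_range hρ0 hρ1 zero_le_two
          (sq_nonneg q) hsq N) (prod_nonneg fun n _ => mul_nonneg (heven n) (by positivity))
    _ ≤ _ := by
        rw [← prod_mul_distrib]
        refine prod_le_prod (fun n _ => ?_) fun n _ => ?_
        · have := heven n
          positivity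
        · have hfactor := one_sub_div_one_add_rpow_mul_le hq0.le hq1 (pow_nonneg (sq_nonneg q) n)
            (pow_le_one₀ (sq_nonneg q) hsq.le)
          rw [show q * (q ^ 2) ^ n = q ^ (2 * n + 1) by ring] at hfactor
          rw [mul_left_comm]
          refine mul_le_mul_of_nonneg_left ?_ (heven n)
          linarith

theorem rpow_mul_jacobiTheta₃_zero_le (hq0 : 0 < q) (hq1 : q < 1) (x : ℝ) :
    ((1 - q) / (1 + q)) ^ (2 / (1 - q ^ 2)) * jacobiTheta₃ q 0 ≤ jacobiTheta₃ q x :=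
  (rpow_mul_jacobiTheta₃_zero_le_pi hq0 hq1).trans <|
    jacobiTheta₃_le_of_cos_le hq0 hq1 (Real.cos_pi ▸ Real.neg_one_le_cos x)

theorem jacobiTheta₃_le_zero (hq0 : 0 < q) (hq1 : q < 1) (x : ℝ) :
    jacobiTheta₃ q x ≤ jacobiTheta₃ q 0 :=
  jacobiTheta₃_le_of_cos_le hq0 hq1 (Real.cos_zero ▸ Real.cos_le_one x)

theorem jacobiTheta₃_pos (hq0 : 0 < q) (hq1 : q < 1) (x : ℝ) : 0 < jacobiTheta₃ q x :=
  (mul_pos (Real.rpow_pos_of_pos (div_pos (sub_pos.mpr hq1) (by positivity)) _)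
    (jacobiTheta₃_zero_pos hq0.le hq1)).trans_le (rpow_mul_jacobiTheta₃_zero_le hq0 hq1 x)

end JacobiTheta₃

section HeatPoissonKernel

variable {q : ℝ}

theorem summable_abs_inv_zpow_add_zpow_neg (hq0 : q ≠ 0) (hq : |q| < 1) :
    Summable fun j : ℤ => |(q ^ j + q ^ (-j))⁻¹| := by
  simpa using summable_norm_heatPoissonSeries (z := 1) hq0 hq (by simpa) (by simpa)

theorem heatPoissonKernel_eq_tsum_int (hq0 : q ≠ 0) (hq : |q| < 1) (x : ℝ) :
    heatPoissonKernel q x = ∑' j : ℤ, (q ^ j + q ^ (-j))⁻¹ * Real.cos (j * x) := by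
  rw [tsum_int_eq_zero_add_two_mul_tsum_pnat (fun j => by simp [add_comm])
    (summable_mul_cos_of_summable_abs (summable_abs_inv_zpow_add_zpow_neg hq0 hq) x),
    tsum_pnat_eq_tsum_succ (f := fun n : ℕ => (q ^ (n : ℤ) + q ^ (-(n : ℤ)))⁻¹ *
      Real.cos ((n : ℤ) * x)), heatPoissonKernel]
  norm_num [div_eq_inv_mul, ← zpow_natCast]

theorem ofReal_heatPoissonKernel (hq0 : q ≠ 0) (hq : |q| < 1) (x : ℝ) :
    (heatPoissonKernel q x : ℂ) = heatPoissonSeries (q : ℂ) (Complex.exp (x * Complex.I)) := by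
  rw [heatPoissonKernel_eq_tsum_int hq0 hq, ofReal_tsum_mul_cos_of_even
    (summable_abs_inv_zpow_add_zpow_neg hq0 hq) fun j => by rw [neg_neg, add_comm],
    heatPoissonSeries]
  push_cast
  simp only [div_eq_inv_mul]

theorem jacobiTheta₃_mul_heatPoissonKernel (hq0 : q ≠ 0) (hq : |q| < 1) (x : ℝ) :
    jacobiTheta₃ q (x + π) * heatPoissonKernel q x * jacobiTheta₃ q 0 =
      jacobiTheta₃ q π * heatPoissonKernel q 0 * jacobiTheta₃ q x := by
  have hnorm : ‖(q : ℂ)‖ < 1 := by simpa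
  have hquot (y : ℝ) : (jacobiTheta₃ q (y + π) * heatPoissonKernel q y : ℂ) =
      thetaMulHeatPoissonCoeff (q : ℂ) 0 * jacobiTheta₃ q y := by
    rw [ofReal_jacobiTheta₃ hq, ofReal_jacobiTheta₃ hq, ofReal_heatPoissonKernel hq0 hq,
      ← thetaSeries_neg_mul_heatPoissonSeries (Complex.ofReal_ne_zero.mpr hq0) hnorm
        (Complex.exp_ne_zero _) (by simpa) (by simpa)]
    push_cast
    rw [add_mul, Complex.exp_add, Complex.exp_pi_mul_I, mul_neg_one]
  have hzero := hquot 0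
  rw [zero_add] at hzero
  exact_mod_cast show (jacobiTheta₃ q (x + π) * heatPoissonKernel q x * jacobiTheta₃ q 0 : ℂ) =
      jacobiTheta₃ q π * heatPoissonKernel q 0 * jacobiTheta₃ q x by
    rw [hquot, hzero]; ring

theorem heatPoissonKernel_zero_eq (hq0 : q ≠ 0) :
    heatPoissonKernel q 0 = 1 / 2 + 2 * ∑' j : ℕ, q ^ (j + 1) / (1 + (q ^ (j + 1)) ^ 2) := by
  rw [heatPoissonKernel]
  congr 2
  refine tsum_congr fun j => ?_
  rw [mul_zero, Real.cos_zero, inv_pow]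
  field_simp
  ring

theorem lt_heatPoissonKernel_zero (hq0 : 0 < q) (hq1 : q < 1) :
    1 / 2 + 2 * q / ((1 + q ^ 2) * (1 - q)) < heatPoissonKernel q 0 := by
  have hgeom : HasSum (fun j : ℕ => q ^ (j + 1) / (1 + q ^ 2)) (q / ((1 + q ^ 2) * (1 - q))) := by
    have hterm (j : ℕ) : q ^ (j + 1) / (1 + q ^ 2) = q / (1 + q ^ 2) * q ^ j := by ring
    simp only [hterm, ← div_div, div_eq_mul_inv _ (1 - q)]
    exact (hasSum_geometric_of_lt_one hq0.le hq1).mul_left _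
  have hsummable : Summable fun j : ℕ => q ^ (j + 1) / (1 + (q ^ (j + 1)) ^ 2) := by
    refine .of_nonneg_of_le (fun j => by positivity) (fun j => ?_)
      ((summable_nat_add_iff 1).mpr (summable_geometric_of_lt_one hq0.le hq1))
    exact div_le_self (by positivity) (le_add_of_nonneg_right (by positivity))
  have hlt : ∑' j : ℕ, q ^ (j + 1) / (1 + q ^ 2) <
      ∑' j : ℕ, q ^ (j + 1) / (1 + (q ^ (j + 1)) ^ 2) := by
    refine Summable.tsum_lt_tsum (i := 1) (fun j => ?_) ?_ hgeom.summable hsummable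
    · have : q ^ (j + 1) ≤ q := pow_le_of_le_one hq0.le hq1.le j.succ_ne_zero
      gcongr
    · have : q ^ (1 + 1) < q := pow_lt_self_of_lt_one₀ hq0 hq1 one_lt_two
      gcongr
  rw [hgeom.tsum_eq] at hlt
  rw [heatPoissonKernel_zero_eq hq0.ne', mul_div_assoc]
  linarith

theorem heatPoissonKernel_zero_mul_rpow_le (hq0 : 0 < q) (hq1 : q < 1) (x : ℝ) :
    heatPoissonKernel q 0 * ((1 - q) / (1 + q)) ^ (4 / (1 - q ^ 2)) ≤ heatPoissonKernel q x := by
  have hρ : 0 < (1 - q) / (1 + q) := div_pos (sub_pos.mpr hq1) (by positivity)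
  have hK0 : 0 < heatPoissonKernel q 0 := by
    have := sub_pos.mpr hq1
    exact lt_trans (by positivity) (lt_heatPoissonKernel_zero hq0 hq1)
  have hθ0 := jacobiTheta₃_pos hq0 hq1 0
  have hθx := jacobiTheta₃_pos hq0 hq1 x
  have hθπ := jacobiTheta₃_pos hq0 hq1 π
  have hθxπ := jacobiTheta₃_pos hq0 hq1 (x + π)
  have hlower := rpow_mul_jacobiTheta₃_zero_le hq0 hq1
  have hupper : jacobiTheta₃ q (x + π) ≤ jacobiTheta₃ q 0 := jacobiTheta₃_le_zero hq0 hq1 _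
  have hexponent : 4 / (1 - q ^ 2) = 2 / (1 - q ^ 2) + 2 / (1 - q ^ 2) := by ring
  rw [hexponent, Real.rpow_add hρ]
  set R := ((1 - q) / (1 + q)) ^ (2 / (1 - q ^ 2))
  have hR : 0 < R := Real.rpow_pos_of_pos hρ _
  calc heatPoissonKernel q 0 * (R * R)
      = heatPoissonKernel q 0 * ((R * jacobiTheta₃ q 0) * (R * jacobiTheta₃ q 0)) /
        (jacobiTheta₃ q 0 * jacobiTheta₃ q 0) := by
        field_simp
    _ ≤ heatPoissonKernel q 0 * (jacobiTheta₃ q π * jacobiTheta₃ q x) /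
        (jacobiTheta₃ q (x + π) * jacobiTheta₃ q 0) := by
        gcongr
        exacts [hlower π, hlower x]
    _ = heatPoissonKernel q x := by
        rw [div_eq_iff (mul_pos hθxπ hθ0).ne']
        linear_combination
          -jacobiTheta₃_mul_heatPoissonKernel hq0.ne' (by rwa [abs_of_pos hq0]) x

end HeatPoissonKernel

theorem heatPoissonKernel_lower_bound (q : ℝ) (hq : q ∈ Set.Ioo (0 : ℝ) 1) (x : ℝ) :
    heatPoissonKernel q x >
      (1 / 2 + 2 * q / ((1 + q ^ 2) * (1 - q))) *
        ((1 - q) / (1 + q)) ^ ((4 : ℝ) / (1 - q ^ 2)) := by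
  obtain ⟨hq0, hq1⟩ := hq
  have hρ : 0 < (1 - q) / (1 + q) := div_pos (sub_pos.mpr hq1) (by positivity)
  calc (1 / 2 + 2 * q / ((1 + q ^ 2) * (1 - q))) * ((1 - q) / (1 + q)) ^ (4 / (1 - q ^ 2))
      < heatPoissonKernel q 0 * ((1 - q) / (1 + q)) ^ (4 / (1 - q ^ 2)) :=
        mul_lt_mul_of_pos_right (lt_heatPoissonKernel_zero hq0 hq1) (Real.rpow_pos_of_pos hρ _)
    _ ≤ heatPoissonKernel q x := heatPoissonKernel_zero_mul_rpow_le hq0 hq1 x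
end

section
/- Let q ∈ (0,1), n a positive integer, β ∈ [0,2). Then the equation Σ_{ν=0}^∞ q^{(2ν+1)n}·cos((2ν+1)θπ − βπ/2) = 0 has exactly one root θ_n in the interval [0,1), and it is given by θ_n = 1 − ⌊β⌋ − (1/π)·arcsin((1 − q^{2n})·cos(βπ/2) / √(1 − 2q^{2n}·cos(βπ) + q^{4n})). -/
/-!
Summing a geometric series of complex exponentials turns the equation into
`(1 - r²) cos b cos x + (1 + r²) sin b sin x = 0` with `r = q ^ n`, `b = βπ / 2` and `x = θπ`.
As `0 ≤ b < π`, the coefficient of `sin x` is nonnegative, so the left side is a positive multiple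
of `sin (x + arcsin s)`, where `s` is the normalised coefficient of `cos x`. The roots `θ` hence
form one coset of `ℤ`, which has exactly one point in `[0, 1)`; the sign of `s`, which is that of
`cos b`, tells which one.
-/

open Real

section TrigonometricSeries

lemma one_sub_two_mul_mul_cos_add_sq_pos {t : ℝ} (ht : |t| ≠ 1) (φ : ℝ) :
    0 < 1 - 2 * t * cos φ + t ^ 2 := by
  have hcos : t * cos φ ≤ |t| :=
    calc t * cos φ ≤ |t| * |cos φ| := (le_abs_self _).trans (abs_mul _ _).le
      _ ≤ |t| := mul_le_of_le_one_right (abs_nonneg t) (abs_cos_le_one φ)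
  have hsq : 0 < (1 - |t|) ^ 2 := sq_pos_of_ne_zero (sub_ne_zero.mpr ht.symm)
  linarith [sq_abs t]

lemma hasSum_pow_mul_cos_add_mul {t : ℝ} (ht : |t| < 1) (a φ : ℝ) :
    HasSum (fun ν : ℕ ↦ t ^ ν * cos (a + ν * φ))
      ((cos a - t * cos (a - φ)) / (1 - 2 * t * cos φ + t ^ 2)) := by
  set w : ℂ := Complex.exp (a * Complex.I) with hw
  set z : ℂ := t * Complex.exp (φ * Complex.I) with hz
  have hz_norm : ‖z‖ < 1 := by
    rwa [hz, norm_mul, Complex.norm_exp_ofReal_mul_I, mul_one, Complex.norm_real]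
  have hz_re : z.re = t * cos φ := by
    rw [hz, Complex.re_ofReal_mul, Complex.exp_ofReal_mul_I_re]
  have hz_im : z.im = t * sin φ := by
    rw [hz, Complex.im_ofReal_mul, Complex.exp_ofReal_mul_I_im]
  have hterm (ν : ℕ) : (w * z ^ ν).re = t ^ ν * cos (a + ν * φ) := by
    have hexp : w * z ^ ν = (t ^ ν : ℝ) * Complex.exp ((a + ν * φ : ℝ) * Complex.I) := by
      rw [hw, hz, mul_pow, ← Complex.exp_nat_mul, mul_left_comm, ← Complex.exp_add]
      push_cast
      ring_nf
    rw [hexp, Complex.re_ofReal_mul, Complex.exp_ofReal_mul_I_re]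
  have hnormSq : Complex.normSq (1 - z) = 1 - 2 * t * cos φ + t ^ 2 := by
    rw [Complex.normSq_apply, Complex.sub_re, Complex.sub_im, hz_re, hz_im, Complex.one_re,
      Complex.one_im]
    linear_combination t ^ 2 * sin_sq_add_cos_sq φ
  have hlimit : (w * (1 - z)⁻¹).re =
      (cos a - t * cos (a - φ)) / (1 - 2 * t * cos φ + t ^ 2) := by
    rw [Complex.mul_re, Complex.inv_re, Complex.inv_im, hnormSq, Complex.sub_re, Complex.sub_im,
      hz_re, hz_im, Complex.one_re, Complex.one_im, hw, Complex.exp_ofReal_mul_I_re,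
      Complex.exp_ofReal_mul_I_im, cos_sub]
    ring
  simpa only [hterm, hlimit] using
    Complex.hasSum_re ((hasSum_geometric_of_norm_lt_one hz_norm).mul_left w)

lemma hasSum_odd_pow_mul_cos_odd_mul_sub {r : ℝ} (hr : |r| < 1) (x b : ℝ) :
    HasSum (fun ν : ℕ ↦ r ^ (2 * ν + 1) * cos ((2 * (ν : ℝ) + 1) * x - b))
      (r * (((1 - r ^ 2) * cos b * cos x + (1 + r ^ 2) * sin b * sin x) /
        (1 - 2 * r ^ 2 * cos (2 * x) + (r ^ 2) ^ 2))) := by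
  have hr_sq : |r ^ 2| < 1 := by rwa [abs_sq, sq_lt_one_iff_abs_lt_one]
  have hterm (ν : ℕ) : r ^ (2 * ν + 1) * cos ((2 * (ν : ℝ) + 1) * x - b) =
      r * ((r ^ 2) ^ ν * cos (x - b + ν * (2 * x))) := by
    ring_nf
  have hnum : (1 - r ^ 2) * cos b * cos x + (1 + r ^ 2) * sin b * sin x =
      cos (x - b) - r ^ 2 * cos (x - b - 2 * x) := by
    rw [show x - b - 2 * x = -(x + b) by ring, cos_neg, cos_sub, cos_add]
    ring
  simpa only [hterm, hnum] using
    (hasSum_pow_mul_cos_add_mul hr_sq (x - b) (2 * x)).mul_left r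

lemma tsum_odd_pow_mul_cos_odd_mul_sub_eq_zero_iff {r : ℝ} (hr₀ : r ≠ 0) (hr : |r| < 1) (x b : ℝ) :
    ∑' ν : ℕ, r ^ (2 * ν + 1) * cos ((2 * (ν : ℝ) + 1) * x - b) = 0 ↔
      (1 - r ^ 2) * cos b * cos x + (1 + r ^ 2) * sin b * sin x = 0 := by
  have hr_sq : |r ^ 2| < 1 := by rwa [abs_sq, sq_lt_one_iff_abs_lt_one]
  have hden := one_sub_two_mul_mul_cos_add_sq_pos hr_sq.ne (2 * x)
  rw [(hasSum_odd_pow_mul_cos_odd_mul_sub hr x b).tsum_eq, mul_eq_zero_iff_left hr₀,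
    div_eq_zero_iff, or_iff_left hden.ne']

end TrigonometricSeries

section PhaseShift

lemma sq_mul_cos_add_sq_mul_sin (t b : ℝ) :
    ((1 - t) * cos b) ^ 2 + ((1 + t) * sin b) ^ 2 = 1 - 2 * t * cos (2 * b) + t ^ 2 := by
  rw [cos_two_mul, mul_pow, mul_pow, sin_sq]
  ring

lemma mul_cos_add_mul_sin_eq_sqrt_mul_sin (a x : ℝ) {c : ℝ} (hc : 0 ≤ c) :
    a * cos x + c * sin x = √(a ^ 2 + c ^ 2) * sin (x + arcsin (a / √(a ^ 2 + c ^ 2))) := by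
  set R := √(a ^ 2 + c ^ 2)
  have hR_sq : R ^ 2 = a ^ 2 + c ^ 2 := sq_sqrt (by positivity)
  have hR_nonneg : 0 ≤ R := sqrt_nonneg _
  rcases hR_nonneg.eq_or_lt' with hR_zero | hR_pos
  · have ha : a = 0 := by nlinarith
    have hc_zero : c = 0 := by nlinarith
    rw [hR_zero, ha, hc_zero, zero_mul, zero_mul, zero_mul, add_zero]
  · have hunit : (a / R) ^ 2 + (c / R) ^ 2 = 1 := by
      rw [div_pow, div_pow, ← add_div, ← hR_sq, div_self (pow_ne_zero 2 hR_pos.ne')]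
    have hsin : sin (arcsin (a / R)) = a / R :=
      sin_arcsin (by nlinarith) (by nlinarith)
    have hcos : cos (arcsin (a / R)) = c / R := by
      rw [cos_arcsin, sub_eq_of_eq_add' hunit.symm, sqrt_sq (by positivity)]
    calc a * cos x + c * sin x = R * (sin x * (c / R) + cos x * (a / R)) := by
          field_simp
          ring
      _ = R * sin (x + arcsin (a / R)) := by rw [sin_add, hsin, hcos]

lemma mul_cos_add_mul_sin_eq_zero_iff {a c : ℝ} (hc : 0 ≤ c) (hac : 0 < a ^ 2 + c ^ 2) (x : ℝ) :
    a * cos x + c * sin x = 0 ↔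
      ∃ k : ℤ, k * π = x + arcsin (a / √(a ^ 2 + c ^ 2)) := by
  rw [mul_cos_add_mul_sin_eq_sqrt_mul_sin a x hc, mul_eq_zero_iff_left (sqrt_pos.mpr hac).ne',
    sin_eq_zero_iff]

end PhaseShift

section Root

/-- The explicit root `θ_n` of the trigonometric series, as a function of `t = q ^ (2 * n)`. -/
noncomputable def rootTheta (t β : ℝ) : ℝ :=
  1 - (⌊β⌋ : ℝ) - (1 / π) * arcsin ((1 - t) * cos (β * π / 2) /
    √(1 - 2 * t * cos (β * π) + t ^ 2))

lemma one_div_pi_mul_arcsin_mem_Icc (s : ℝ) :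
    1 / π * arcsin s ∈ Set.Icc (-(1 / 2) : ℝ) (1 / 2) := by
  rw [one_div_mul_eq_div, Set.mem_Icc, le_div_iff₀ pi_pos, div_le_iff₀ pi_pos]
  constructor <;> linarith [neg_pi_div_two_le_arcsin s, arcsin_le_pi_div_two s]

lemma rootTheta_mem_Ico {t β : ℝ} (ht : |t| < 1) (hβ : β ∈ Set.Ico (0 : ℝ) 2) :
    rootTheta t β ∈ Set.Ico (0 : ℝ) 1 := by
  obtain ⟨hβ₀, hβ₂⟩ := hβ
  have ht_pos : 0 < 1 - t := sub_pos.mpr (abs_lt.mp ht).2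
  have hR : 0 < √(1 - 2 * t * cos (β * π) + t ^ 2) :=
    sqrt_pos.mpr (one_sub_two_mul_mul_cos_add_sq_pos ht.ne _)
  rw [rootTheta]
  set s := (1 - t) * cos (β * π / 2) / √(1 - 2 * t * cos (β * π) + t ^ 2)
  obtain ⟨hlower, hupper⟩ := one_div_pi_mul_arcsin_mem_Icc s
  rcases lt_or_ge β 1 with hβ₁ | hβ₁
  · have hfloor : ⌊β⌋ = 0 := Int.floor_eq_zero_iff.mpr ⟨hβ₀, hβ₁⟩
    have hcos : 0 < cos (β * π / 2) :=
      cos_pos_of_mem_Ioo ⟨by nlinarith [pi_pos], by nlinarith [pi_pos]⟩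
    have harcsin : 0 < 1 / π * arcsin s :=
      mul_pos (by positivity) (arcsin_pos.mpr (by positivity))
    rw [hfloor, Int.cast_zero]
    constructor <;> linarith
  · have hfloor : ⌊β⌋ = 1 := Int.floor_eq_iff.mpr ⟨by simpa using hβ₁, by norm_num [hβ₂]⟩
    have hcos : cos (β * π / 2) ≤ 0 :=
      cos_nonpos_of_pi_div_two_le_of_le (by nlinarith [pi_pos]) (by nlinarith [pi_pos])
    have hs : s ≤ 0 :=
      div_nonpos_of_nonpos_of_nonneg (mul_nonpos_of_nonneg_of_nonpos ht_pos.le hcos) hR.le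
    have harcsin : 1 / π * arcsin s ≤ 0 :=
      mul_nonpos_of_nonneg_of_nonpos (by positivity) (arcsin_nonpos.mpr hs)
    rw [hfloor, Int.cast_one]
    constructor <;> linarith

lemma mul_cos_add_mul_sin_eq_zero_iff_exists_sub_rootTheta {t β : ℝ} (ht : |t| < 1)
    (hβ : β ∈ Set.Icc (0 : ℝ) 2) (θ : ℝ) :
    (1 - t) * cos (β * π / 2) * cos (θ * π) + (1 + t) * sin (β * π / 2) * sin (θ * π) = 0 ↔
      ∃ k : ℤ, θ - rootTheta t β = k := by
  have hsin : 0 ≤ sin (β * π / 2) :=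
    sin_nonneg_of_nonneg_of_le_pi (by nlinarith [pi_pos, hβ.1]) (by nlinarith [pi_pos, hβ.2])
  have hcoeff : 0 ≤ (1 + t) * sin (β * π / 2) :=
    mul_nonneg (by linarith [(abs_lt.mp ht).1]) hsin
  have hamp : ((1 - t) * cos (β * π / 2)) ^ 2 + ((1 + t) * sin (β * π / 2)) ^ 2 =
      1 - 2 * t * cos (β * π) + t ^ 2 := by
    rw [sq_mul_cos_add_sq_mul_sin, mul_div_cancel₀ _ two_ne_zero]
  have hamp_pos := hamp ▸ one_sub_two_mul_mul_cos_add_sq_pos ht.ne (β * π)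
  rw [mul_cos_add_mul_sin_eq_zero_iff hcoeff hamp_pos, hamp, rootTheta]
  set φ := arcsin ((1 - t) * cos (β * π / 2) / √(1 - 2 * t * cos (β * π) + t ^ 2))
  have hscale (k : ℤ) : k * π = θ * π + φ ↔ θ + 1 / π * φ = k := by
    field_simp
    exact eq_comm
  simp only [hscale]
  constructor
  · rintro ⟨k, hk⟩
    exact ⟨k - 1 + ⌊β⌋, by push_cast; linarith⟩
  · rintro ⟨k, hk⟩
    exact ⟨k + 1 - ⌊β⌋, by push_cast; linarith⟩

lemma exists_sub_eq_intCast_iff_eq {R : Type*} [Ring R] [LinearOrder R] [IsOrderedRing R]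
    [FloorRing R] {x y : R} (hx : x ∈ Set.Ico 0 1) (hy : y ∈ Set.Ico 0 1) :
    (∃ k : ℤ, x - y = k) ↔ x = y := by
  rw [← Int.fract_eq_fract, Int.fract_eq_self.mpr hx, Int.fract_eq_self.mpr hy]

theorem root_theta_unique_and_explicit_general {r β : ℝ} (hr₀ : r ≠ 0) (hr : |r| < 1)
    (hβ : β ∈ Set.Ico (0 : ℝ) 2) :
    rootTheta (r ^ 2) β ∈ Set.Ico (0 : ℝ) 1 ∧
    ∀ θ ∈ Set.Ico (0 : ℝ) 1,
      ∑' ν : ℕ, r ^ (2 * ν + 1) * cos ((2 * (ν : ℝ) + 1) * θ * π - β * π / 2) = 0 ↔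
        θ = rootTheta (r ^ 2) β := by
  have hr_sq : |r ^ 2| < 1 := by rwa [abs_sq, sq_lt_one_iff_abs_lt_one]
  have hmem := rootTheta_mem_Ico hr_sq hβ
  refine ⟨hmem, fun θ hθ ↦ ?_⟩
  simp only [mul_assoc _ θ π]
  rw [tsum_odd_pow_mul_cos_odd_mul_sub_eq_zero_iff hr₀ hr,
    mul_cos_add_mul_sin_eq_zero_iff_exists_sub_rootTheta hr_sq (Set.Ico_subset_Icc_self hβ),
    exists_sub_eq_intCast_iff_eq hθ hmem]

end Root

theorem root_theta_unique_and_explicit (q β : ℝ) (hq : q ∈ Set.Ioo (0 : ℝ) 1)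
    (n : ℕ) (hn : 0 < n) (hβ : β ∈ Set.Ico (0 : ℝ) 2) :
    (1 - (⌊β⌋ : ℝ) - (1 / π) * Real.arcsin ((1 - q ^ (2 * n)) * Real.cos (β * π / 2) /
        Real.sqrt (1 - 2 * q ^ (2 * n) * Real.cos (β * π) + q ^ (4 * n))))
      ∈ Set.Ico (0 : ℝ) 1 ∧
    ∀ θ ∈ Set.Ico (0 : ℝ) 1,
      ((∑' ν : ℕ, q ^ ((2 * ν + 1) * n) *
          Real.cos ((2 * (ν : ℝ) + 1) * θ * π - β * π / 2)) = 0 ↔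
        θ = 1 - (⌊β⌋ : ℝ) - (1 / π) * Real.arcsin ((1 - q ^ (2 * n)) * Real.cos (β * π / 2) /
          Real.sqrt (1 - 2 * q ^ (2 * n) * Real.cos (β * π) + q ^ (4 * n)))) := by
  have hr : |q ^ n| < 1 := by
    rw [abs_of_pos (pow_pos hq.1 n)]
    exact pow_lt_one₀ hq.1.le hq.2 hn.ne'
  have hpow (m : ℕ) : q ^ (m * n) = (q ^ n) ^ m := by rw [mul_comm, pow_mul]
  simpa only [rootTheta, hpow, ← pow_mul (q ^ n) 2 2] using
    root_theta_unique_and_explicit_general (pow_ne_zero n hq.1.ne') hr hβ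
end

section
/- Let q ∈ (0,1), n a positive integer, and x ∈ ℝ. If Σ_{ν=0}^∞ q^{(2ν+1)n}·cos((2ν+1)x) = 0, then |cos x| ≤ q^{2n}/(1 − q^{2n}); consequently also 0 ≤ 1 − |sin x| ≤ q^{2n}/(1 − q^{2n}). -/
open Real

/-!
After division by `q ^ n` the series becomes `∑ s ^ ν * cos ((2 * ν + 1) * x)` with
`s = q ^ (2 * n)`. If it vanishes, its constant term is minus the rest, which is dominated by the
geometric series `s + s ^ 2 + ⋯ = s / (1 - s)`. The bound for the sine follows from
`1 - |sin x| ≤ |cos x|`.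
-/

section GeometricWeights

variable {𝕜 E : Type*} [NormedField 𝕜] [NormedAddCommGroup E] [NormedSpace 𝕜 E]
  {s : 𝕜} {a : ℕ → E} {C : ℝ}

theorem norm_pow_smul_le_mul_pow (ha : ∀ ν, ‖a ν‖ ≤ C) (ν : ℕ) :
    ‖s ^ ν • a ν‖ ≤ C * ‖s‖ ^ ν := by
  rw [norm_smul, norm_pow, mul_comm]
  gcongr
  exact ha ν

theorem summable_pow_smul_of_norm_le [CompleteSpace E] (hs : ‖s‖ < 1) (ha : ∀ ν, ‖a ν‖ ≤ C) :
    Summable fun ν ↦ s ^ ν • a ν :=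
  .of_norm_bounded ((summable_geometric_of_lt_one (norm_nonneg s) hs).mul_left C)
    (norm_pow_smul_le_mul_pow ha)

theorem norm_tsum_pow_smul_le (hs : ‖s‖ < 1) (ha : ∀ ν, ‖a ν‖ ≤ C) :
    ‖∑' ν, s ^ ν • a ν‖ ≤ C / (1 - ‖s‖) :=
  tsum_of_norm_bounded ((hasSum_geometric_of_lt_one (norm_nonneg s) hs).mul_left C)
    (norm_pow_smul_le_mul_pow ha)

theorem norm_zero_le_of_tsum_pow_smul_eq_zero [CompleteSpace E] (hs : ‖s‖ < 1)
    (ha : ∀ ν, ‖a ν‖ ≤ C) (hsum : ∑' ν, s ^ ν • a ν = 0) :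
    ‖a 0‖ ≤ ‖s‖ * (C / (1 - ‖s‖)) := by
  have tail_eq : ∑' ν, s ^ (ν + 1) • a (ν + 1) = s • ∑' ν, s ^ ν • a (ν + 1) := by
    simp only [pow_succ', mul_smul, tsum_const_smul'']
  have head_eq : a 0 = -(s • ∑' ν, s ^ ν • a (ν + 1)) := by
    rw [(summable_pow_smul_of_norm_le hs ha).tsum_eq_zero_add, tail_eq, pow_zero, one_smul] at hsum
    exact eq_neg_of_add_eq_zero_left hsum
  rw [head_eq, norm_neg, norm_smul]
  gcongr
  exact norm_tsum_pow_smul_le hs fun ν ↦ ha (ν + 1)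

end GeometricWeights

theorem tsum_odd_pow_mul {𝕜 : Type*} [DivisionRing 𝕜] [TopologicalSpace 𝕜] [IsTopologicalRing 𝕜]
    [T2Space 𝕜] (r : 𝕜) (a : ℕ → 𝕜) :
    ∑' ν, r ^ (2 * ν + 1) * a ν = r * ∑' ν, (r ^ 2) ^ ν * a ν := by
  simp only [← tsum_mul_left, ← mul_assoc, ← pow_mul, ← pow_succ']

theorem one_sub_abs_sin_le_abs_cos (x : ℝ) : 1 - |sin x| ≤ |cos x| := calc
  1 - |sin x| ≤ 1 - |sin x| ^ 2 := by
    gcongr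
    exact pow_le_of_le_one (abs_nonneg _) (abs_sin_le_one x) two_ne_zero
  _ = |cos x| ^ 2 := by rw [sq_abs, sq_abs, cos_sq']
  _ ≤ |cos x| := pow_le_of_le_one (abs_nonneg _) (abs_cos_le_one x) two_ne_zero

theorem abs_cos_le_of_tsum_odd_pow_mul_cos_eq_zero {r : ℝ} (hr0 : r ≠ 0) (hr1 : |r| < 1)
    {θ : ℕ → ℝ} (hroot : ∑' ν, r ^ (2 * ν + 1) * cos (θ ν) = 0) :
    |cos (θ 0)| ≤ r ^ 2 / (1 - r ^ 2) := by
  have norm_sq : ‖r ^ 2‖ = r ^ 2 := norm_of_nonneg (sq_nonneg r)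
  have norm_sq_lt_one : ‖r ^ 2‖ < 1 := norm_sq.trans_lt ((sq_lt_one_iff_abs_lt_one r).mpr hr1)
  have hroot_sq : ∑' ν, (r ^ 2) ^ ν • cos (θ ν) = 0 := by
    rw [tsum_odd_pow_mul] at hroot
    exact (mul_eq_zero.mp hroot).resolve_left hr0
  have bound := norm_zero_le_of_tsum_pow_smul_eq_zero norm_sq_lt_one
    (fun ν ↦ abs_cos_le_one (θ ν)) hroot_sq
  rwa [norm_sq, mul_one_div] at bound

/-- Arbitrary angles cover the phase-shifted series, `θ ν = (2 * ν + 1) * x - β * π / 2`. -/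
theorem cos_bound_at_root_general {q : ℝ} (hq0 : q ≠ 0) (hq1 : |q| < 1) {n : ℕ} (hn : n ≠ 0)
    {θ : ℕ → ℝ} (hroot : ∑' ν : ℕ, q ^ ((2 * ν + 1) * n) * cos (θ ν) = 0) :
    |cos (θ 0)| ≤ q ^ (2 * n) / (1 - q ^ (2 * n)) ∧
      0 ≤ 1 - |sin (θ 0)| ∧ 1 - |sin (θ 0)| ≤ q ^ (2 * n) / (1 - q ^ (2 * n)) := by
  have abs_pow_lt_one : |q ^ n| < 1 := by
    rw [abs_pow]
    exact pow_lt_one₀ (abs_nonneg q) hq1 hn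
  have cos_bound : |cos (θ 0)| ≤ q ^ (2 * n) / (1 - q ^ (2 * n)) := by
    simp only [pow_mul'] at hroot ⊢
    exact abs_cos_le_of_tsum_odd_pow_mul_cos_eq_zero (pow_ne_zero n hq0) abs_pow_lt_one hroot
  exact ⟨cos_bound, sub_nonneg.mpr (abs_sin_le_one _),
    (one_sub_abs_sin_le_abs_cos _).trans cos_bound⟩

theorem cos_bound_at_root (q : ℝ) (hq : q ∈ Set.Ioo (0 : ℝ) 1) (n : ℕ) (hn : 0 < n) (x : ℝ)
    (hroot : ∑' ν : ℕ, q ^ ((2 * ν + 1) * n) * Real.cos ((2 * (ν : ℝ) + 1) * x) = 0) :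
    |Real.cos x| ≤ q ^ (2 * n) / (1 - q ^ (2 * n)) ∧
      0 ≤ 1 - |Real.sin x| ∧ 1 - |Real.sin x| ≤ q ^ (2 * n) / (1 - q ^ (2 * n)) := by
  have hq1 : |q| < 1 := (abs_of_pos hq.1).trans_lt hq.2
  simpa only [Nat.cast_zero, mul_zero, zero_add, one_mul] using
    cos_bound_at_root_general hq.1.ne' hq1 hn.ne' hroot
end

section
/- Let q ∈ (0, 9/25] and let n ≥ 9 be an integer. Then q^n/(1 − q^{2n}) ≤ 7·q^{√n}/(37·n²). -/
open Real

/-!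
Dividing by `q ^ √x` and multiplying by `x ^ 2`, the claim reads
`x ^ 2 * q ^ (x - √x) / (1 - q ^ (2 * x)) ≤ 7 / 37`. The left-hand side increases with `q`, and it
decreases in `x` because its logarithmic derivative is at most
`2 / x + (1 - 1 / (2 * √x)) * log q`, which is negative for `q ≤ 9 / 25` and `x ≥ 9`. So the worst
case is the corner `q = 9 / 25`, `x = 9`, where `√x = 3` makes the left-hand side rational.
-/

theorem sqrt_sub_sqrt_le_sub_div {a x y : ℝ} (ha : 0 < a) (hax : a ≤ x) (hxy : x ≤ y) :
    √y - √x ≤ (y - x) / (2 * √a) := by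
  have hsqrt_ax : √a ≤ √x := sqrt_le_sqrt hax
  have hsqrt_xy : √x ≤ √y := sqrt_le_sqrt hxy
  rw [le_div_iff₀ (by positivity)]
  calc (√y - √x) * (2 * √a) ≤ (√y - √x) * (√y + √x) :=
        mul_le_mul_of_nonneg_left (by linarith) (by linarith)
    _ = √y ^ 2 - √x ^ 2 := by ring
    _ = y - x := by rw [sq_sqrt (by linarith), sq_sqrt (by linarith)]

theorem pow_le_pow_mul_exp {x y : ℝ} (hx : 0 < x) (hy : 0 ≤ y) (k : ℕ) :
    y ^ k ≤ x ^ k * exp (k / x * (y - x)) := by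
  have hratio : y / x ≤ exp ((y - x) / x) := by
    simpa [sub_div, hx.ne'] using add_one_le_exp ((y - x) / x)
  calc y ^ k = x ^ k * (y / x) ^ k := by rw [← mul_pow, mul_div_cancel₀ y hx.ne']
    _ ≤ x ^ k * exp ((y - x) / x) ^ k := by gcongr
    _ = x ^ k * exp (k / x * (y - x)) := by rw [← exp_nat_mul]; ring_nf

theorem antitoneOn_pow_mul_rpow_sub_sqrt {q a : ℝ} {k : ℕ} (hq₀ : 0 < q) (hq₁ : q ≤ 1)
    (ha : 0 < a) (hk : k / a ≤ (1 - 1 / (2 * √a)) * -log q) :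
    AntitoneOn (fun x : ℝ ↦ x ^ k * q ^ (x - √x)) (Set.Ici a) := by
  intro x hax y _ hxy
  rw [Set.mem_Ici] at hax
  have hx : 0 < x := ha.trans_le hax
  have hgrowth : k / x * (y - x) ≤ (1 - 1 / (2 * √a)) * -log q * (y - x) := by
    have hk_div : (k : ℝ) / x ≤ k / a := by gcongr
    exact mul_le_mul_of_nonneg_right (hk_div.trans hk) (by linarith)
  have hslope : (1 - 1 / (2 * √a)) * (y - x) ≤ (y - √y) - (x - √x) := by
    linear_combination sqrt_sub_sqrt_le_sub_div ha hax hxy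
  have hdecay : k / x * (y - x) + log q * (y - √y) ≤ log q * (x - √x) := by
    linear_combination hgrowth + mul_le_mul_of_nonpos_left hslope (log_nonpos hq₀.le hq₁)
  calc y ^ k * q ^ (y - √y)
      ≤ x ^ k * exp (k / x * (y - x)) * q ^ (y - √y) := by
        gcongr
        exact pow_le_pow_mul_exp hx (hx.le.trans hxy) k
    _ = x ^ k * exp (k / x * (y - x) + log q * (y - √y)) := by
        rw [mul_assoc, rpow_def_of_pos hq₀, exp_add]
    _ ≤ x ^ k * exp (log q * (x - √x)) := by gcongr
    _ = x ^ k * q ^ (x - √x) := by rw [rpow_def_of_pos hq₀]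

theorem pow_mul_rpow_sub_sqrt_div_one_sub_rpow_le {q c a x : ℝ} {k : ℕ} (hq : 0 < q)
    (hqc : q ≤ c) (hc : c < 1) (ha : 1 ≤ a) (hax : a ≤ x)
    (hk : k / a ≤ (1 - 1 / (2 * √a)) * -log c) :
    x ^ k * q ^ (x - √x) / (1 - q ^ (2 * x)) ≤ a ^ k * c ^ (a - √a) / (1 - c ^ (2 * a)) := by
  have hc₀ : 0 < c := hq.trans_le hqc
  have hx : 0 < x := by linarith
  have hsqrt : √x ≤ x := sqrt_le_self_iff.2 (.inr (ha.trans hax))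
  have hnum : x ^ k * q ^ (x - √x) ≤ a ^ k * c ^ (a - √a) :=
    calc x ^ k * q ^ (x - √x) ≤ x ^ k * c ^ (x - √x) := by gcongr
      _ ≤ a ^ k * c ^ (a - √a) :=
        antitoneOn_pow_mul_rpow_sub_sqrt hc₀ hc.le (by linarith) hk Set.self_mem_Ici hax hax
  have hpow : q ^ (2 * x) ≤ c ^ (2 * a) :=
    calc q ^ (2 * x) ≤ c ^ (2 * x) := by gcongr
      _ ≤ c ^ (2 * a) := rpow_le_rpow_of_exponent_ge hc₀ hc.le (by linarith)
  have hden : 0 < 1 - c ^ (2 * a) := sub_pos.2 (rpow_lt_one hc₀.le hc (by linarith))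
  gcongr

theorem sq_mul_rpow_sub_sqrt_div_one_sub_rpow_le {q x : ℝ} (hq : q ∈ Set.Ioc (0 : ℝ) (9 / 25))
    (hx : 9 ≤ x) : x ^ 2 * q ^ (x - √x) / (1 - q ^ (2 * x)) ≤ 7 / 37 := by
  have hsqrt : √(9 : ℝ) = 3 := by rw [sqrt_eq_iff_mul_self_eq] <;> norm_num
  have hlog : log (9 / 25) ≤ 9 / 25 - 1 := log_le_sub_one_of_pos (by norm_num)
  have hslope : ((2 : ℕ) : ℝ) / 9 ≤ (1 - 1 / (2 * √9)) * -log (9 / 25) := by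
    rw [hsqrt]
    push_cast
    linarith
  calc x ^ 2 * q ^ (x - √x) / (1 - q ^ (2 * x))
      ≤ 9 ^ 2 * (9 / 25) ^ (9 - √9) / (1 - (9 / 25) ^ (2 * 9 : ℝ)) :=
        pow_mul_rpow_sub_sqrt_div_one_sub_rpow_le hq.1 hq.2 (by norm_num) (by norm_num) hx hslope
    _ ≤ 7 / 37 := by rw [hsqrt]; norm_num

theorem technical_condition_small_q_general (q : ℝ) (hq : q ∈ Set.Ioc (0 : ℝ) (9 / 25))
    (x : ℝ) (hx : 9 ≤ x) :
    q ^ x / (1 - q ^ (2 * x)) ≤ 7 * q ^ √x / (37 * x ^ 2) := by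
  have : 0 < x := by linarith
  have hq₀ : 0 < q := hq.1
  calc q ^ x / (1 - q ^ (2 * x))
      = q ^ √x / x ^ 2 * (x ^ 2 * q ^ (x - √x) / (1 - q ^ (2 * x))) := by
        rw [rpow_sub hq₀]
        field_simp
    _ ≤ q ^ √x / x ^ 2 * (7 / 37) := by
        gcongr ?_ * ?_
        exact sq_mul_rpow_sub_sqrt_div_one_sub_rpow_le hq hx
    _ = 7 * q ^ √x / (37 * x ^ 2) := by ring

theorem technical_condition_small_q (q : ℝ) (hq : q ∈ Set.Ioc (0 : ℝ) (9 / 25))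
    (n : ℕ) (hn : 9 ≤ n) :
    q ^ n / (1 - q ^ (2 * n)) ≤ 7 * q ^ (Real.sqrt n) / (37 * (n : ℝ) ^ 2) := by
  exact_mod_cast technical_condition_small_q_general q hq n (mod_cast hn)
end

section
/- Let q ∈ (9/25, 1) and let n ≥ 9 be an integer satisfying the inequality (★): (43/(10(1−q)))·q^{√n} + (160/(57(n−√n)))·q/(1−q)² ≤ (1/2 + 2q/((1+q²)(1−q)))·((1−q)/(1+q))^{4/(1−q²)}. Then q^n/(1 − q^{2n}) ≤ 7·q^{√n}/(37·n²). -/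
open Real

/-!
Put `r = (1 + q) / (1 - q)`. The right-hand side of (★) is at most `r⁻³`, while its left-hand side
exceeds `160 q / (57 n (1 - q)²)`, so (★) forces `n > 160 q / (57 (1 - q)²) * r³`. For `q ≥ 9 / 25`
this lower bound dominates `(9 r / 4)²`, whence `√n ≥ 9 r / 4`. Since `-log q ≥ 2 / r`, it follows
that `-log q * √n ≥ 9 / 2`, and therefore `q ^ (n - √n) ≤ exp (-9 / 2 * (√n - 1))`. This exponential
beats `n² = √n ^ 4` with the required constant because `√n ≥ 9 / 4`.
-/

/-- Condition (★), which defines the threshold `n_q` in the paper, with a real number `x` in place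
of the integer `n`. -/
def ThresholdCondition (q x : ℝ) : Prop :=
  43 / (10 * (1 - q)) * q ^ √x + 160 / (57 * (x - √x)) * (q / (1 - q) ^ 2) ≤
    (1 / 2 + 2 * q / ((1 + q ^ 2) * (1 - q))) * ((1 - q) / (1 + q)) ^ (4 / (1 - q ^ 2))

section ThresholdBound

variable {q x : ℝ}

lemma half_add_div_le_one_add_div_one_sub (hq0 : 0 ≤ q) (hq1 : q < 1) :
    1 / 2 + 2 * q / ((1 + q ^ 2) * (1 - q)) ≤ (1 + q) / (1 - q) := by
  have h1q : 0 < 1 - q := sub_pos.2 hq1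
  have hdiff : (1 + q) / (1 - q) - (1 / 2 + 2 * q / ((1 + q ^ 2) * (1 - q))) =
      (1 - q + q ^ 2 + 3 * q ^ 3) / (2 * (1 + q ^ 2) * (1 - q)) := by
    field_simp
    ring
  rw [← sub_nonneg, hdiff]
  positivity

lemma one_sub_div_one_add_rpow_le_pow_four (hq0 : 0 ≤ q) (hq1 : q < 1) :
    ((1 - q) / (1 + q)) ^ (4 / (1 - q ^ 2)) ≤ ((1 - q) / (1 + q)) ^ 4 := by
  have hbase0 : 0 < (1 - q) / (1 + q) := div_pos (sub_pos.2 hq1) (by positivity)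
  have hbase1 : (1 - q) / (1 + q) ≤ 1 := by
    rw [div_le_one (by positivity)]
    linarith
  have hexponent : 4 ≤ 4 / (1 - q ^ 2) :=
    le_div_self (by norm_num) (sub_pos.2 (pow_lt_one₀ hq0 hq1 two_ne_zero))
      (sub_le_self 1 (sq_nonneg q))
  exact_mod_cast rpow_le_rpow_of_exponent_ge hbase0 hbase1 hexponent

lemma ThresholdCondition.mul_pow_three_lt (h : ThresholdCondition q x) (hq0 : 0 < q) (hq1 : q < 1)
    (hx : 1 < x) : 160 * q / (57 * (1 - q) ^ 2) * ((1 + q) / (1 - q)) ^ 3 < x := by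
  have h1q : 0 < 1 - q := sub_pos.2 hq1
  have hsub : 0 < x - √x :=
    sub_pos.2 ((sqrt_lt' (by positivity)).2 (lt_self_pow₀ hx one_lt_two))
  have hlhs : 160 / (57 * x) * (q / (1 - q) ^ 2) < ((1 - q) / (1 + q)) ^ 3 :=
    calc 160 / (57 * x) * (q / (1 - q) ^ 2)
        ≤ 160 / (57 * (x - √x)) * (q / (1 - q) ^ 2) := by
          gcongr
          exact sub_le_self x (sqrt_nonneg x)
      _ < 43 / (10 * (1 - q)) * q ^ √x + 160 / (57 * (x - √x)) * (q / (1 - q) ^ 2) :=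
          lt_add_of_pos_left _ (by positivity)
      _ ≤ (1 / 2 + 2 * q / ((1 + q ^ 2) * (1 - q))) *
            ((1 - q) / (1 + q)) ^ (4 / (1 - q ^ 2)) := h
      _ ≤ (1 + q) / (1 - q) * ((1 - q) / (1 + q)) ^ 4 := by
          gcongr
          · exact half_add_div_le_one_add_div_one_sub hq0.le hq1
          · exact one_sub_div_one_add_rpow_le_pow_four hq0.le hq1
      _ = ((1 - q) / (1 + q)) ^ 3 := by field_simp
  calc 160 * q / (57 * (1 - q) ^ 2) * ((1 + q) / (1 - q)) ^ 3
      = x * (160 / (57 * x) * (q / (1 - q) ^ 2)) * ((1 + q) / (1 - q)) ^ 3 := by field_simp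
    _ < x * ((1 - q) / (1 + q)) ^ 3 * ((1 + q) / (1 - q)) ^ 3 := by gcongr
    _ = x := by field_simp

lemma sq_nine_mul_one_add_div_le (hq : 9 / 25 ≤ q) (hq1 : q < 1) :
    (9 * (1 + q) / (4 * (1 - q))) ^ 2 ≤
      160 * q / (57 * (1 - q) ^ 2) * ((1 + q) / (1 - q)) ^ 3 := by
  have h1q : 0 < 1 - q := sub_pos.2 hq1
  have hcube : (1 - q) ^ 3 ≤ (16 / 25) ^ 3 := by
    gcongr
    linarith
  have hpoly : 81 * 57 * (1 - q) ^ 3 ≤ 16 * 160 * q * (1 + q) := by nlinarith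
  calc (9 * (1 + q) / (4 * (1 - q))) ^ 2
      = 81 * 57 * (1 - q) ^ 3 * ((1 + q) ^ 2 / (16 * 57 * (1 - q) ^ 5)) := by
        field_simp
        norm_num
    _ ≤ 16 * 160 * q * (1 + q) * ((1 + q) ^ 2 / (16 * 57 * (1 - q) ^ 5)) := by gcongr
    _ = 160 * q / (57 * (1 - q) ^ 2) * ((1 + q) / (1 - q)) ^ 3 := by field_simp

end ThresholdBound

section Decay

variable {q x : ℝ}

lemma two_mul_one_sub_div_one_add_le_neg_log (hq0 : 0 < q) (hq1 : q ≤ 1) :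
    2 * (1 - q) / (1 + q) ≤ -log q := by
  have hinv : 0 ≤ q⁻¹ - 1 := sub_nonneg.2 ((one_le_inv₀ hq0).2 hq1)
  have hden : q⁻¹ - 1 + 2 = (1 + q) / q := by
    field_simp
    ring
  calc 2 * (1 - q) / (1 + q) = 2 * (q⁻¹ - 1) / (q⁻¹ - 1 + 2) := by
        rw [hden]
        field_simp
    _ ≤ log (1 + (q⁻¹ - 1)) := le_log_one_add_of_nonneg hinv
    _ = -log q := by rw [add_sub_cancel, log_inv]

lemma mul_pow_four_le_exp {s : ℝ} (hs : 9 / 4 ≤ s) : 11 / 2 * s ^ 4 ≤ exp (9 / 2 * (s - 1)) := by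
  -- The tangent line of `exp` is used at `s = 9 / 4`, the worst case.
  have htangent : s ≤ 9 / 4 * exp (4 / 9 * s - 1) := by
    linarith [add_one_le_exp (4 / 9 * s - 1)]
  have hexp_five : 11 / 2 * (9 / 4) ^ 4 ≤ exp 5 :=
    calc (11 / 2 * (9 / 4) ^ 4 : ℝ) ≤ 2.7 ^ 5 := by norm_num
      _ ≤ exp 1 ^ 5 := by
        gcongr
        linarith [exp_one_gt_d9]
      _ = exp 5 := by
        rw [← exp_nat_mul]
        norm_num
  calc 11 / 2 * s ^ 4 ≤ 11 / 2 * (9 / 4 * exp (4 / 9 * s - 1)) ^ 4 := by gcongr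
    _ = 11 / 2 * (9 / 4) ^ 4 * exp (4 * (4 / 9 * s - 1)) := by
      rw [mul_pow, ← exp_nat_mul, mul_assoc, Nat.cast_ofNat]
    _ ≤ exp 5 * exp (4 * (4 / 9 * s - 1)) := by gcongr
    _ = exp (5 + 4 * (4 / 9 * s - 1)) := (exp_add _ _).symm
    _ ≤ exp (9 / 2 * (s - 1)) := by
      gcongr
      linarith

lemma rpow_sub_sqrt_mul_sq_le (hq0 : 0 < q) (hx : 9 / 4 ≤ √x) (hlog : 9 / 2 ≤ -log q * √x) :
    q ^ (x - √x) * x ^ 2 ≤ 2 / 11 := by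
  have hsq : √x ^ 2 = x := sq_sqrt (sqrt_pos.1 (by linarith)).le
  have hdecay : q ^ (x - √x) ≤ exp (-(9 / 2 * (√x - 1))) := by
    rw [rpow_def_of_pos hq0, exp_le_exp]
    calc log q * (x - √x) = -(-log q * √x * (√x - 1)) := by linear_combination -log q * hsq
      _ ≤ -(9 / 2 * (√x - 1)) := by
        gcongr
        linarith
  have hgrowth : x ^ 2 ≤ 2 / 11 * exp (9 / 2 * (√x - 1)) := by
    have hfour : √x ^ 4 = x ^ 2 := by rw [← hsq, ← pow_mul, hsq]
    linarith [mul_pow_four_le_exp hx]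
  calc q ^ (x - √x) * x ^ 2
      ≤ exp (-(9 / 2 * (√x - 1))) * (2 / 11 * exp (9 / 2 * (√x - 1))) := by gcongr
    _ = 2 / 11 := by
      rw [mul_left_comm, ← exp_add, neg_add_cancel, exp_zero, mul_one]

lemma rpow_div_one_sub_rpow_two_mul_le (hq0 : 0 < q) (hq1 : q < 1)
    (hx : 9 * (1 + q) / (4 * (1 - q)) ≤ √x) :
    q ^ x / (1 - q ^ (2 * x)) ≤ 7 * q ^ √x / (37 * x ^ 2) := by
  have h1q : 0 < 1 - q := sub_pos.2 hq1
  have hsqrt : 9 / 4 ≤ √x := by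
    refine le_trans ?_ hx
    rw [div_le_div_iff₀ (by norm_num) (by positivity)]
    linarith
  have hx0 : 0 < x := sqrt_pos.1 (by linarith)
  have hlog : 9 / 2 ≤ -log q * √x :=
    calc 9 / 2 = 2 * (1 - q) / (1 + q) * (9 * (1 + q) / (4 * (1 - q))) := by
          field_simp
          norm_num
      _ ≤ -log q * √x := by
          gcongr
          · exact neg_nonneg.2 (log_nonpos hq0.le hq1.le)
          · exact two_mul_one_sub_div_one_add_le_neg_log hq0 hq1.le
  have hdecay : q ^ (x - √x) * x ^ 2 ≤ 2 / 11 := rpow_sub_sqrt_mul_sq_le hq0 hsqrt hlog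
  -- The bound `3 / 77` is the one for which `7 * (1 - 3 / 77) = 37 * (2 / 11)`.
  have hsmall : q ^ (2 * x) ≤ 3 / 77 := by
    have hx5 : 5 ≤ x := by nlinarith [sq_sqrt hx0.le]
    have hle : q ^ (2 * x) ≤ q ^ (x - √x) :=
      rpow_le_rpow_of_exponent_ge hq0 hq1.le (by linarith [sqrt_nonneg x])
    have hfive : q ^ (x - √x) * 5 ^ 2 ≤ 2 / 11 := le_trans (by gcongr) hdecay
    linarith
  rw [div_le_div_iff₀ (by linarith) (by positivity)]
  calc q ^ x * (37 * x ^ 2) = q ^ √x * (37 * (q ^ (x - √x) * x ^ 2)) := by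
        rw [rpow_sub hq0]
        field_simp
    _ ≤ q ^ √x * (7 * (1 - q ^ (2 * x))) := by
        gcongr q ^ √x * ?_
        linarith
    _ = 7 * q ^ √x * (1 - q ^ (2 * x)) := by ring

end Decay

theorem technical_condition_large_q_general {q x : ℝ} (hq : q ∈ Set.Ioo (9 / 25 : ℝ) 1)
    (hx : 1 < x) (hstar : ThresholdCondition q x) :
    q ^ x / (1 - q ^ (2 * x)) ≤ 7 * q ^ √x / (37 * x ^ 2) := by
  obtain ⟨hq', hq1⟩ := hq
  have hq0 : 0 < q := by linarith
  have hsq : (9 * (1 + q) / (4 * (1 - q))) ^ 2 ≤ x :=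
    (sq_nine_mul_one_add_div_le hq'.le hq1).trans (hstar.mul_pow_three_lt hq0 hq1 hx).le
  exact rpow_div_one_sub_rpow_two_mul_le hq0 hq1 (le_sqrt_of_sq_le hsq)

theorem technical_condition_large_q (q : ℝ) (hq : q ∈ Set.Ioo (9 / 25 : ℝ) 1)
    (n : ℕ) (hn : 9 ≤ n)
    (hstar : 43 / (10 * (1 - q)) * q ^ (Real.sqrt n) +
        160 / (57 * ((n : ℝ) - Real.sqrt n)) * (q / (1 - q) ^ 2) ≤
      (1 / 2 + 2 * q / ((1 + q ^ 2) * (1 - q))) *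
        ((1 - q) / (1 + q)) ^ ((4 : ℝ) / (1 - q ^ 2))) :
    q ^ n / (1 - q ^ (2 * n)) ≤ 7 * q ^ (Real.sqrt n) / (37 * (n : ℝ) ^ 2) := by
  have hn1 : (1 : ℝ) < n := by exact_mod_cast (by lia : 1 < n)
  exact_mod_cast technical_condition_large_q_general hq hn1 hstar
end

section
/- Let q ∈ (0,1) and let n ≥ 9 be an integer with n > (9(1+q)/(4(1−q)))². Then q^n/(1 − q^{2n}) ≤ 7·q^{√n}/(37·n²). -/
open Real

/-!
Write `s = √x` and `L = log q⁻¹`, so that `q ^ s / q ^ x = exp (L * s * (s - 1))`. If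
`s ≥ 9 / 4 * (1 + q) / (1 - q)`, then `s ≥ 9 / 4`, and `L ≥ 2 * (1 - q) / (1 + q)` gives
`L * s ≥ 9 / 2`. For such `s`, `exp (9 / 2 * (s - 1))` exceeds `8 * s ^ 4 = 8 * x ^ 2`, and `8` is
far enough above `37 / 7` to absorb the denominator `1 - q ^ (2 * x)`.
-/

theorem two_mul_one_sub_div_one_add_le_log_inv {q : ℝ} (hq₀ : 0 < q) (hq₁ : q ≤ 1) :
    2 * (1 - q) / (1 + q) ≤ log q⁻¹ := by
  have hinv : 0 ≤ q⁻¹ - 1 := sub_nonneg.2 ((one_le_inv₀ hq₀).2 hq₁)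
  calc 2 * (1 - q) / (1 + q) = 2 * (q⁻¹ - 1) / (q⁻¹ - 1 + 2) := by
        have hsum : q⁻¹ - 1 + 2 = (1 + q) / q := by
          field_simp
          ring
        rw [hsum]
        field_simp
    _ ≤ log (1 + (q⁻¹ - 1)) := le_log_one_add_of_nonneg hinv
    _ = log q⁻¹ := by rw [add_sub_cancel]

theorem two_mul_le_mul_log_inv {q c s : ℝ} (hq : q ∈ Set.Ioo (0 : ℝ) 1) (hc : 0 ≤ c)
    (hs : c * (1 + q) / (1 - q) ≤ s) : 2 * c ≤ s * log q⁻¹ := by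
  have hsub : 0 < 1 - q := sub_pos.2 hq.2
  have hadd : 0 < 1 + q := add_pos one_pos hq.1
  calc 2 * c = c * (1 + q) / (1 - q) * (2 * (1 - q) / (1 + q)) := by field_simp
    _ ≤ s * log q⁻¹ :=
        mul_le_mul hs (two_mul_one_sub_div_one_add_le_log_inv hq.1 hq.2.le) (by positivity)
          (le_trans (by positivity) hs)

theorem eight_mul_pow_four_le_exp_mul_sub_one {s : ℝ} (hs : 9 / 4 ≤ s) :
    8 * s ^ 4 ≤ exp (9 / 2 * (s - 1)) := by
  have hroot : 27 / 16 * s ≤ exp (9 / 8 * (s - 1)) := by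
    calc 27 / 16 * s ≤ 27 / 10 * (9 / 8 * (s - 1)) := by linarith
      _ ≤ exp 1 * (9 / 8 * (s - 1)) := by
          gcongr
          · linarith
          · linarith [exp_one_gt_d9]
      _ ≤ exp (9 / 8 * (s - 1)) := exp_one_mul_le_exp
  calc 8 * s ^ 4 ≤ (27 / 16 * s) ^ 4 := by
        rw [mul_pow]
        gcongr
        norm_num
    _ ≤ exp (9 / 8 * (s - 1)) ^ 4 := by gcongr
    _ = exp (9 / 2 * (s - 1)) := by
        rw [← exp_nat_mul]
        congr 1
        ring

theorem eight_mul_pow_four_mul_rpow_sq_le {q s : ℝ} (hq : 0 < q) (hs : 9 / 4 ≤ s)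
    (hlog : 9 / 2 ≤ s * log q⁻¹) : 8 * s ^ 4 * q ^ (s ^ 2) ≤ q ^ s := by
  have hexp : exp (9 / 2 * (s - 1)) ≤ q ^ (s - s ^ 2) := by
    rw [log_inv] at hlog
    rw [rpow_def_of_pos hq, exp_le_exp]
    calc 9 / 2 * (s - 1) ≤ s * -log q * (s - 1) := by gcongr; linarith
      _ = log q * (s - s ^ 2) := by ring
  calc 8 * s ^ 4 * q ^ (s ^ 2) ≤ q ^ (s - s ^ 2) * q ^ (s ^ 2) := by
        gcongr
        exact (eight_mul_pow_four_le_exp_mul_sub_one hs).trans hexp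
    _ = q ^ s := by rw [← rpow_add hq, sub_add_cancel]

theorem div_one_sub_sq_le_four_thirds_mul {a : ℝ} (ha₀ : 0 ≤ a) (ha : a ≤ 1 / 2) :
    a / (1 - a ^ 2) ≤ 4 / 3 * a := by
  have hsq : a ^ 2 ≤ 1 / 4 := by nlinarith
  rw [div_le_iff₀ (by linarith)]
  nlinarith

theorem technical_condition_of_n_large_general {q x : ℝ} (hq : q ∈ Set.Ioo (0 : ℝ) 1)
    (hx : (9 * (1 + q) / (4 * (1 - q))) ^ 2 ≤ x) :
    q ^ x / (1 - q ^ (2 * x)) ≤ 7 * q ^ √x / (37 * x ^ 2) := by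
  have hq₀ : 0 < q := hq.1
  have hsub : 0 < 1 - q := sub_pos.2 hq.2
  have hthreshold : 9 / 4 * (1 + q) / (1 - q) ≤ √x := by
    convert le_sqrt_of_sq_le hx using 1
    field_simp
  have hsqrt : 9 / 4 ≤ √x := by
    refine le_trans ?_ hthreshold
    rw [le_div_iff₀ hsub]
    linarith
  have hx_eq : √x ^ 2 = x := sq_sqrt ((sq_nonneg _).trans hx)
  have hlog : 9 / 2 ≤ √x * log q⁻¹ := by
    linarith [two_mul_le_mul_log_inv hq (by norm_num) hthreshold]
  have hdecay : 8 * x ^ 2 * q ^ x ≤ q ^ √x := by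
    have := eight_mul_pow_four_mul_rpow_sq_le hq₀ hsqrt hlog
    rwa [hx_eq, show √x ^ 4 = (√x ^ 2) ^ 2 by ring, hx_eq] at this
  have hx_one : 1 ≤ x := by nlinarith
  have hpow_pos : 0 < q ^ x := rpow_pos_of_pos hq₀ x
  have hhalf : q ^ x ≤ 1 / 2 := by
    have hle_one : q ^ √x ≤ 1 := rpow_le_one hq₀.le hq.2.le (sqrt_nonneg x)
    nlinarith [one_le_pow₀ hx_one (n := 2)]
  calc q ^ x / (1 - q ^ (2 * x)) = q ^ x / (1 - (q ^ x) ^ 2) := by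
        rw [mul_comm 2 x, rpow_mul hq₀.le, rpow_two]
    _ ≤ 4 / 3 * q ^ x := div_one_sub_sq_le_four_thirds_mul hpow_pos.le hhalf
    _ ≤ 7 * (8 * x ^ 2 * q ^ x) / (37 * x ^ 2) := by field_simp; norm_num
    _ ≤ 7 * q ^ √x / (37 * x ^ 2) := by gcongr

theorem technical_condition_of_n_large (q : ℝ) (hq : q ∈ Set.Ioo (0 : ℝ) 1)
    (n : ℕ) (hn : 9 ≤ n) (hbig : (n : ℝ) > (9 * (1 + q) / (4 * (1 - q))) ^ 2) :
    q ^ n / (1 - q ^ (2 * n)) ≤ 7 * q ^ (Real.sqrt n) / (37 * (n : ℝ) ^ 2) := by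
  exact_mod_cast technical_condition_of_n_large_general hq hbig.le
end
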